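/- arXiv:2002.09095 — 8 statements merged into one kernel-verified Lean document; each statement's English description precedes it below -/
import Mathlib

section
/- Let K ≥ 1, α > 0, and take constant step sizes α_k = α/√K for all k ≥ 1. Define weights w_k = ∑_{j=k}^{K} α_j β₁^{j−k} and the averaged iterate x̄^(K) = (∑_{k=1}^{K} w_k x^(k)) / (∑_{k=1}^{K} w_k). Then E[F(x̄^(K))] − F* ≤ ( n·D∞²·G∞ + (α²/(1−β₁)²)·G₁/√(1−β₂) ) / ( 2α·√K·(1−β₁) ). -/
open MeasureTheory Finset

/-- running bound for `m² / √v̂` -/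
noncomputable def auxR (β c : ℝ) (g : ℕ → ℝ) : ℕ → ℝ
  | 0 => 0
  | k+1 => β * auxR β c g k + (1 - β) * (|g (k+1)| / c)

lemma auxR_nonneg {β c : ℝ} (h0 : 0 ≤ β) (h1 : β < 1) (hc : 0 < c) (g : ℕ → ℝ) (k : ℕ) :
    0 ≤ auxR β c g k := by
  induction k with
  | zero => simp [auxR]
  | succ k ih =>
    have : 0 < 1 - β := by linarith
    simp only [auxR]; positivity

lemma aux_msq {β c : ℝ} (h0 : 0 ≤ β) (h1 : β < 1) (hc : 0 < c) (g m s : ℕ → ℝ)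
    (hs : ∀ k, 0 ≤ s k) (hmono : ∀ k, s k ≤ s (k+1)) (hgs : ∀ k, c * |g (k+1)| ≤ s (k+1))
    (hm0 : m 0 = 0) (hm : ∀ k, m (k+1) = β * m k + (1 - β) * g (k+1)) (k : ℕ) :
    m k ^ 2 ≤ s k * auxR β c g k := by
  induction k with
  | zero => simp [auxR, hm0]
  | succ k ih =>
    have hb : 0 < 1 - β := by linarith
    have e1 : m (k+1) ^ 2 ≤ β * m k ^ 2 + (1 - β) * g (k+1) ^ 2 := by
      rw [hm]
      nlinarith [mul_nonneg (mul_nonneg h0 hb.le) (sq_nonneg (m k - g (k+1)))]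
    have e2 : g (k+1) ^ 2 ≤ s (k+1) * (|g (k+1)| / c) := by
      rw [← sq_abs, mul_div_assoc', le_div_iff₀ hc]
      nlinarith [mul_le_mul_of_nonneg_right (hgs k) (abs_nonneg (g (k+1)))]
    have e3 : m k ^ 2 ≤ s (k+1) * auxR β c g k :=
      ih.trans (mul_le_mul_of_nonneg_right (hmono k) (auxR_nonneg h0 h1 hc g k))
    simp only [auxR]
    nlinarith [mul_le_mul_of_nonneg_left e2 hb.le, mul_le_mul_of_nonneg_left e3 h0]

lemma aux_young {w W m d s R : ℝ} (hs : 0 ≤ s) (hR : 0 ≤ R) (hw : 0 ≤ w) (hwW : w ≤ W)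
    (h : m ^ 2 ≤ s * R) : - (w * (d * m)) - 1/2 * (s * d ^ 2) ≤ 1/2 * W ^ 2 * R := by
  have hWW : w ^ 2 ≤ W ^ 2 := by gcongr
  have : 1/2 * w ^ 2 * R ≤ 1/2 * W ^ 2 * R := by gcongr
  refine le_trans ?_ this
  rcases hs.eq_or_lt with h0 | h0
  · subst h0
    have : m = 0 := by
      have : m ^ 2 ≤ 0 := by simpa using h
      nlinarith [sq_nonneg m, pow_eq_zero_iff (two_ne_zero) |>.1 (le_antisymm this (sq_nonneg m))]
    subst this
    simp; positivity
  · have : 0 ≤ s * (1/2 * w ^ 2 * R + w * (d * m) + 1/2 * (s * d ^ 2)) := by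
      nlinarith [sq_nonneg (w * m + s * d), mul_le_mul_of_nonneg_left h (sq_nonneg w)]
    have := nonneg_of_mul_nonneg_right this h0
    linarith

lemma aux_tele (s e : ℕ → ℝ) (D : ℝ) (hs0 : s 0 = 0) (hmono : ∀ k, s k ≤ s (k+1))
    (he : ∀ k, 1 ≤ k → e k ^ 2 ≤ D ^ 2) (K : ℕ) :
    ∑ k ∈ Finset.Icc 1 K, s k * (e k ^ 2 - e (k+1) ^ 2) ≤ s K * (D ^ 2 - e (K+1) ^ 2) := by
  induction K with
  | zero => simp [hs0]
  | succ K ih =>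
    rw [Finset.sum_Icc_succ_top (by omega)]
    nlinarith [mul_le_mul_of_nonneg_right (hmono K) (sub_nonneg.2 (he (K+1) (by omega)))]

/-- the averaging weights -/
noncomputable def auxW (β a : ℝ) (K k : ℕ) : ℝ := ∑ j ∈ Finset.Icc k K, a * β ^ (j - k)

lemma aux_swap (β a : ℝ) (C : ℕ → ℝ) (K : ℕ) :
    ∑ k ∈ Finset.Icc 1 K, a * ∑ t ∈ Finset.Icc 1 k, β ^ (k - t) * C t
      = ∑ t ∈ Finset.Icc 1 K, auxW β a K t * C t := by
  simp only [auxW, Finset.mul_sum, Finset.sum_mul]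
  rw [Finset.sum_comm' (t' := Finset.Icc 1 K) (s' := fun t => Finset.Icc t K)]
  · refine Finset.sum_congr rfl fun _ _ => Finset.sum_congr rfl fun _ _ => by ring
  · intro x y; simp only [Finset.mem_Icc]; omega

lemma auxW_le {β a : ℝ} (h0 : 0 ≤ β) (h1 : β < 1) (ha : 0 ≤ a) (K k : ℕ) :
    auxW β a K k ≤ a / (1 - β) := by
  have hb : 0 < 1 - β := by linarith
  have : auxW β a K k = a * ∑ j ∈ Finset.range (K + 1 - k), β ^ j := by
    rw [auxW, ← Finset.mul_sum]
    congr 1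
    have : Finset.Icc k K = Finset.Ico k (K+1) := by ext; simp
    rw [this, Finset.sum_Ico_eq_sum_range]
    simp
  rw [this, le_div_iff₀ hb, mul_assoc]
  have h2 := geom_sum_mul_neg β (K + 1 - k)
  rw [h2]
  nlinarith [pow_nonneg h0 (K + 1 - k)]

lemma auxW_ge {β a : ℝ} (h0 : 0 ≤ β) (ha : 0 ≤ a) {K k : ℕ} (hk : k ≤ K) :
    a ≤ auxW β a K k := by
  have := Finset.single_le_sum (f := fun j => a * β ^ (j - k)) (s := Finset.Icc k K)
    (fun j _ => by positivity) (Finset.mem_Icc.2 ⟨le_rfl, hk⟩)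
  simpa [auxW] using this

lemma aux_AB (β : ℝ) (A B C T : ℕ → ℝ) (hT : ∀ k, T k = A k + B k) (h0 : T 0 = 0)
    (hA : ∀ k, A (k+1) = (1 - β) * C (k+1) + β * T k) (k : ℕ) :
    T k = ∑ t ∈ Finset.Icc 1 k, β ^ (k - t) * ((1 - β) * C t + B t) := by
  induction k with
  | zero => simp [h0]
  | succ k ih =>
    rw [Finset.sum_Icc_succ_top (by omega), hT, hA, ih, Finset.mul_sum]
    have : ∀ t ∈ Finset.Icc 1 k, β * (β ^ (k - t) * ((1 - β) * C t + B t))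
        = β ^ (k + 1 - t) * ((1 - β) * C t + B t) := by
      intro t ht
      rw [Finset.mem_Icc] at ht
      rw [show k + 1 - t = (k - t) + 1 by omega, pow_succ]; ring
    rw [Finset.sum_congr rfl this]
    simp; ring

lemma aux_core {n : ℕ} (β c a D G : ℝ) (h0 : 0 ≤ β) (h1 : β < 1) (hc : 0 < c) (ha : 0 ≤ a)
    (g m s x : ℕ → Fin n → ℝ) (y : Fin n → ℝ)
    (hs : ∀ k i, 0 ≤ s k i) (hs0 : ∀ i, s 0 i = 0) (hmono : ∀ k i, s k i ≤ s (k+1) i)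
    (hgs : ∀ k i, c * |g (k+1) i| ≤ s (k+1) i)
    (hm0 : ∀ i, m 0 i = 0) (hm : ∀ k i, m (k+1) i = β * m k i + (1 - β) * g (k+1) i)
    (hD : ∀ k i, 1 ≤ k → |x k i - y i| ≤ D) (hG : ∀ k i, s k i ≤ G)
    (hopt : ∀ k, 1 ≤ k → ∑ i, (x (k+1) i - y i) *
        (s k i * (x (k+1) i - x k i) + a * m k i) ≤ 0) (K : ℕ) :
    (1 - β) * ∑ k ∈ Finset.Icc 1 K, auxW β a K k * ∑ i, (x k i - y i) * g k i
      ≤ 1/2 * (n * D ^ 2 * G) + 1/2 * (a / (1 - β)) ^ 2 *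
        ∑ k ∈ Finset.Icc 1 K, ∑ i, auxR β c (fun k => g k i) k := by
  set C : ℕ → ℝ := fun k => ∑ i, (x k i - y i) * g k i with hC
  set B : ℕ → ℝ := fun k => ∑ i, (x (k+1) i - x k i) * m k i with hB
  set A : ℕ → ℝ := fun k => ∑ i, (x k i - y i) * m k i with hA
  have hT := aux_AB β A B C (fun k => A k + B k) (fun _ => rfl) (by simp [A, B, hm0]) (by
    intro k
    simp only [A, B, C, ← Finset.sum_add_distrib, Finset.mul_sum]
    refine Finset.sum_congr rfl fun i _ => ?_
    rw [hm]; ring)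
  have hsum : ∑ k ∈ Finset.Icc 1 K, a * (A k + B k)
      = (1 - β) * ∑ k ∈ Finset.Icc 1 K, auxW β a K k * C k
        + ∑ k ∈ Finset.Icc 1 K, auxW β a K k * B k := by
    have := aux_swap β a (fun t => (1 - β) * C t + B t) K
    rw [Finset.sum_congr rfl (fun k _ => by rw [hT k]), this, Finset.mul_sum,
      ← Finset.sum_add_distrib]
    refine Finset.sum_congr rfl fun i _ => ?_
    ring
  have hstep : ∀ k ∈ Finset.Icc 1 K, a * (A k + B k) - auxW β a K k * B k
      ≤ 1/2 * ∑ i, s k i * ((x k i - y i) ^ 2 - (x (k+1) i - y i) ^ 2)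
        + 1/2 * (a / (1 - β)) ^ 2 * ∑ i, auxR β c (fun k => g k i) k := by
    intro k hk
    rw [Finset.mem_Icc] at hk
    have ho := hopt k hk.1
    have hy : ∑ i, (- (auxW β a K k * ((x (k+1) i - x k i) * m k i))
        - 1/2 * (s k i * (x (k+1) i - x k i) ^ 2))
        ≤ ∑ i, 1/2 * (a / (1 - β)) ^ 2 * auxR β c (fun k => g k i) k := by
      refine Finset.sum_le_sum fun i _ => ?_
      exact aux_young (hs k i) (auxR_nonneg h0 h1 hc _ k) (ha.trans (auxW_ge h0 ha hk.2))
        (auxW_le h0 h1 ha K k)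
        (aux_msq h0 h1 hc (fun k => g k i) (fun k => m k i) (fun k => s k i)
          (fun k => hs k i) (fun k => hmono k i) (fun k => hgs k i) (hm0 i) (fun k => hm k i) k)
    have he : a * (A k + B k) - auxW β a K k * B k =
        ∑ i, (x (k+1) i - y i) * (s k i * (x (k+1) i - x k i) + a * m k i)
        + 1/2 * ∑ i, s k i * ((x k i - y i) ^ 2 - (x (k+1) i - y i) ^ 2)
        + ∑ i, (- (auxW β a K k * ((x (k+1) i - x k i) * m k i))
        - 1/2 * (s k i * (x (k+1) i - x k i) ^ 2)) := by
      simp only [A, B, ← Finset.sum_add_distrib, Finset.mul_sum, ← Finset.sum_sub_distrib]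
      refine Finset.sum_congr rfl fun i _ => ?_
      ring
    rw [← Finset.mul_sum] at hy
    linarith
  have htot := Finset.sum_le_sum hstep
  rw [Finset.sum_sub_distrib, hsum, Finset.sum_add_distrib, ← Finset.mul_sum, ← Finset.mul_sum,
    Finset.sum_comm] at htot
  have htele : ∑ i, ∑ k ∈ Finset.Icc 1 K, s k i * ((x k i - y i) ^ 2 - (x (k+1) i - y i) ^ 2)
      ≤ ∑ i : Fin n, D ^ 2 * G := by
    refine Finset.sum_le_sum fun i _ => ?_
    refine (aux_tele (fun k => s k i) (fun k => x k i - y i) D (hs0 i) (fun k => hmono k i)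
      (fun k hk => sq_le_sq' (abs_le.1 (hD k i hk)).1 (abs_le.1 (hD k i hk)).2) K).trans ?_
    nlinarith [mul_nonneg (hs K i) (sq_nonneg (x (K+1) i - y i)),
      mul_le_mul_of_nonneg_left (hG K i) (sq_nonneg D)]
  simp only [Finset.sum_const, Finset.card_univ, Fintype.card_fin, nsmul_eq_mul] at htele
  linarith

lemma aux_int {n : ℕ} {Ω : Type*} [mΩ : MeasurableSpace Ω] (P : Measure Ω) [IsProbabilityMeasure P]
    {X : Set (Fin n → ℝ)} (hX : IsCompact X) (f : (Fin n → ℝ) → ℝ) (hf : Continuous f)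
    (z : Ω → Fin n → ℝ) (hz : Measurable z) (hzX : ∀ᵐ ω ∂P, z ω ∈ X) :
    Integrable (fun ω => f (z ω)) P := by
  obtain ⟨M, hM⟩ := hX.exists_bound_of_continuousOn hf.continuousOn
  refine Integrable.of_bound (hf.measurable.comp hz).aestronglyMeasurable M ?_
  filter_upwards [hzX] with ω h using hM _ h

lemma aux_R_int {Ω : Type*} [mΩ : MeasurableSpace Ω] (P : Measure Ω)
    {β c : ℝ} (g : ℕ → Ω → ℝ) (hg : ∀ k, 1 ≤ k → Integrable (g k) P) (k : ℕ) :
    Integrable (fun ω => auxR β c (fun k => g k ω) k) P := by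
  induction k with
  | zero => simp [auxR]
  | succ k ih =>
    simp only [auxR]
    exact (ih.const_mul _).add (((hg (k+1) (by omega)).abs.div_const _).const_mul _)

lemma aux_R_le {n : ℕ} {Ω : Type*} [mΩ : MeasurableSpace Ω] (P : Measure Ω)
    {β c G₁ : ℝ} (h0 : 0 ≤ β) (h1 : β < 1) (hc : 0 < c) (g : ℕ → Ω → Fin n → ℝ)
    (hg : ∀ k, 1 ≤ k → ∀ i, Integrable (fun ω => g k ω i) P)
    (hG0 : 0 ≤ G₁) (hG1 : ∀ k, 1 ≤ k → ∫ ω, (∑ i, |g k ω i|) ∂P ≤ G₁) (k : ℕ) :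
    ∫ ω, ∑ i, auxR β c (fun k => g k ω i) k ∂P ≤ G₁ / c := by
  induction k with
  | zero => simp [auxR]; positivity
  | succ k ih =>
    have e : ∀ ω, ∑ i, auxR β c (fun k => g k ω i) (k+1)
        = β * ∑ i, auxR β c (fun k => g k ω i) k + (1 - β) / c * ∑ i, |g (k+1) ω i| := by
      intro ω
      simp only [auxR, Finset.mul_sum, ← Finset.sum_add_distrib]
      refine Finset.sum_congr rfl fun i _ => ?_
      ring
    simp only [e]
    rw [integral_add, integral_const_mul, integral_const_mul]
    · have hb : 0 < 1 - β := by linarith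
      have := hG1 (k+1) (by omega)
      have e3 : (1 - β) / c * ∫ ω, (∑ i, |g (k+1) ω i|) ∂P ≤ (1 - β) / c * G₁ := by gcongr
      have e4 : (1 - β) / c * G₁ = (1 - β) * (G₁ / c) := by ring
      nlinarith [mul_le_mul_of_nonneg_left ih h0]
    · exact (integrable_finsetSum _ fun i _ =>
        aux_R_int P (fun k ω => g k ω i) (fun k hk => hg k hk i) k).const_mul _
    · exact (integrable_finsetSum _ fun i _ => (hg (k+1) (by omega) i).abs).const_mul _

lemma aux_pull {Ω : Type*} (m0 : MeasurableSpace Ω) [mΩ : MeasurableSpace Ω] (P : Measure Ω)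
    [IsProbabilityMeasure P] (hm : m0 ≤ mΩ) (u g : Ω → ℝ) (hu : Measurable[m0] u) (M : ℝ)
    (hub : ∀ᵐ ω ∂P, |u ω| ≤ M) (hg : Integrable g P) :
    Integrable (fun ω => u ω * g ω) P ∧ Integrable (fun ω => u ω * (P[g|m0]) ω) P ∧
    ∫ ω, u ω * (P[g|m0]) ω ∂P = ∫ ω, u ω * g ω ∂P := by
  have hu' : AEStronglyMeasurable u P := (hu.mono hm le_rfl).aestronglyMeasurable
  have i1 : Integrable (fun ω => u ω * g ω) P := hg.bdd_mul hu' (c := M) hub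
  have i2 : Integrable (fun ω => u ω * (P[g|m0]) ω) P :=
    integrable_condExp.bdd_mul hu' (c := M) hub
  refine ⟨i1, i2, ?_⟩
  have := condExp_mul_of_stronglyMeasurable_left (μ := P) (m := m0) (f := u) (g := g)
    hu.stronglyMeasurable i1 hg
  rw [← integral_condExp hm (f := fun ω => u ω * g ω)]
  exact (integral_congr_ae this).symm


/-- convex case without delay, constant step size: with `α_k = α/√K`,
`w_k = ∑_{j=k}^K α_j β₁^{j−k}` and `x̄^(K) = (∑_k w_k x^(k))/(∑_k w_k)`,
`E[F(x̄^(K))] − F* ≤ (n D∞² G∞ + (α²/(1−β₁)²) G₁/√(1−β₂)) / (2α√K(1−β₁))`. -/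
theorem stmt0
    {n : ℕ} (hn : 1 ≤ n)
    (β₁ β₂ : ℝ) (hβ₁ : β₁ ∈ Set.Ico (0:ℝ) 1) (hβ₂ : β₂ ∈ Set.Ico (0:ℝ) 1)
    {Ω : Type*} [mΩ : MeasurableSpace Ω] (P : Measure Ω) [IsProbabilityMeasure P]
    (ℱ : Filtration ℕ mΩ)
    (g m v vhat x : ℕ → Ω → (Fin n → ℝ))
    (hgmeas : ∀ k, Measurable (g k))
    (hxmeas : ∀ k, Measurable[ℱ k] (x k))
    (hm0 : ∀ ω i, m 0 ω i = 0) (hv0 : ∀ ω i, v 0 ω i = 0) (hvhat0 : ∀ ω i, vhat 0 ω i = 0)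
    (hm : ∀ k ω i, m (k+1) ω i = β₁ * m k ω i + (1 - β₁) * g (k+1) ω i)
    (hv : ∀ k ω i, v (k+1) ω i = β₂ * v k ω i + (1 - β₂) * (g (k+1) ω i)^2)
    (hvhat : ∀ k ω i, vhat (k+1) ω i = max (vhat k ω i) (v (k+1) ω i))
    (X : Set (Fin n → ℝ)) (hXne : X.Nonempty) (hXcpt : IsCompact X) (hXcvx : Convex ℝ X)
    (Dinf Ginf G₁ : ℝ)
    (hD : ∀ p ∈ X, ∀ q ∈ X, ∀ i, |p i - q i| ≤ Dinf)
    (hGinf : ∀ k, 1 ≤ k → ∀ᵐ ω ∂P, ∀ i, |g k ω i| ≤ Ginf)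
    (hG1 : ∀ k, 1 ≤ k → ∫ ω, (∑ i, |g k ω i|) ∂P ≤ G₁)
    (F : (Fin n → ℝ) → ℝ) (hF : ConvexOn ℝ Set.univ F)
    (Fstar : ℝ) (hFstar : IsLeast (F '' X) Fstar)
    (K : ℕ) (hK : 1 ≤ K) (α : ℝ) (hα : 0 < α)
    (αseq : ℕ → ℝ) (hαseq : ∀ k, 1 ≤ k → αseq k = α / Real.sqrt K)
    (hxX : ∀ᵐ ω ∂P, ∀ k, 1 ≤ k → x k ω ∈ X)
    (hopt : ∀ᵐ ω ∂P, ∀ k, 1 ≤ k → ∀ y ∈ X,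
      (∑ i, (x (k+1) ω i - y i) *
        (Real.sqrt (vhat k ω i) * (x (k+1) ω i - x k ω i) + αseq k * m k ω i)) ≤ 0)
    (hsub : ∀ k, 1 ≤ k → ∀ᵐ ω ∂P, ∀ y ∈ X,
      F y ≥ F (x k ω) + ∑ i, (P[(fun ω' => g k ω' i)|ℱ k]) ω * (y i - x k ω i)) :
    (∫ ω, F (fun i =>
        (∑ k ∈ Finset.Icc 1 K,
            (∑ j ∈ Finset.Icc k K, αseq j * β₁ ^ (j - k)) * x k ω i) /
        (∑ k ∈ Finset.Icc 1 K, ∑ j ∈ Finset.Icc k K, αseq j * β₁ ^ (j - k))) ∂P) - Fstar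
      ≤ (n * Dinf^2 * Ginf + (α^2 / (1 - β₁)^2) * (G₁ / Real.sqrt (1 - β₂)))
          / (2 * α * Real.sqrt K * (1 - β₁)) := by
  classical
  obtain ⟨hb0, hb1⟩ := hβ₁
  obtain ⟨hc0, hc1⟩ := hβ₂
  have hb : 0 < 1 - β₁ := by linarith
  have hcc : 0 < 1 - β₂ := by linarith
  have hc : 0 < Real.sqrt (1 - β₂) := Real.sqrt_pos.2 hcc
  set c := Real.sqrt (1 - β₂) with hcdef
  have hcsq : c ^ 2 = 1 - β₂ := Real.sq_sqrt hcc.le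
  have hKpos : (0:ℝ) < K := by exact_mod_cast hK
  have hsK : 0 < Real.sqrt K := Real.sqrt_pos.2 hKpos
  set a := α / Real.sqrt K with hadef
  have ha : 0 < a := by positivity
  have haK : K * a = α * Real.sqrt K := by
    rw [hadef]; field_simp; rw [Real.sq_sqrt hKpos.le]
  have haK2 : K * a ^ 2 = α ^ 2 := by
    rw [hadef, div_pow, Real.sq_sqrt hKpos.le]; field_simp
  -- weights
  have hw : ∀ k ∈ Finset.Icc 1 K, (∑ j ∈ Finset.Icc k K, αseq j * β₁ ^ (j - k))
      = auxW β₁ a K k := by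
    intro k hk
    rw [Finset.mem_Icc] at hk
    refine Finset.sum_congr rfl fun j hj => ?_
    rw [Finset.mem_Icc] at hj
    rw [hαseq j (by omega)]
  have hwpos : ∀ k ∈ Finset.Icc 1 K, a ≤ auxW β₁ a K k := fun k hk =>
    auxW_ge hb0 ha.le (Finset.mem_Icc.1 hk).2
  set S := ∑ k ∈ Finset.Icc 1 K, auxW β₁ a K k with hS
  have hSge : α * Real.sqrt K ≤ S := by
    rw [← haK]
    have := Finset.card_nsmul_le_sum (Finset.Icc 1 K) (fun k => auxW β₁ a K k) a hwpos
    simpa using this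
  have hSpos : 0 < S := lt_of_lt_of_le (by positivity) hSge
  have hxbar : ∀ ω, (fun i => (∑ k ∈ Finset.Icc 1 K,
            (∑ j ∈ Finset.Icc k K, αseq j * β₁ ^ (j - k)) * x k ω i) /
        (∑ k ∈ Finset.Icc 1 K, ∑ j ∈ Finset.Icc k K, αseq j * β₁ ^ (j - k)))
      = ∑ k ∈ Finset.Icc 1 K, (auxW β₁ a K k / S) • x k ω := by
    intro ω
    funext i
    rw [Finset.sum_congr rfl hw, Finset.sum_congr rfl (fun k hk => by rw [hw k hk]),
      Finset.sum_div, Finset.sum_apply]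
    refine Finset.sum_congr rfl fun k _ => ?_
    simp only [Pi.smul_apply, smul_eq_mul]; ring
  simp only [hxbar]
  have hq0 : ∀ k ∈ Finset.Icc 1 K, 0 ≤ auxW β₁ a K k / S := fun k hk =>
    div_nonneg (ha.le.trans (hwpos k hk)) hSpos.le
  have hq1 : ∑ k ∈ Finset.Icc 1 K, auxW β₁ a K k / S = 1 := by
    rw [← Finset.sum_div]; exact div_self hSpos.ne'
  have hxm : ∀ k, Measurable (x k) := fun k => (hxmeas k).mono (ℱ.le k) le_rfl
  have hFc : Continuous F := by
    rw [← continuousOn_univ]; exact hF.continuousOn isOpen_univ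
  have hxX' : ∀ k, 1 ≤ k → ∀ᵐ ω ∂P, x k ω ∈ X := fun k hk => by
    filter_upwards [hxX] with ω h using h k hk
  have hFx : ∀ k, 1 ≤ k → Integrable (fun ω => F (x k ω)) P := fun k hk =>
    aux_int P hXcpt F hFc (x k) (hxm k) (hxX' k hk)
  have hFbar : Integrable (fun ω => F (∑ k ∈ Finset.Icc 1 K, (auxW β₁ a K k / S) • x k ω)) P := by
    refine aux_int P hXcpt F hFc _ ?_ ?_
    · refine Finset.measurable_fun_sum _ fun k _ => ?_
      exact (hxm k).const_smul (auxW β₁ a K k / S)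
    · filter_upwards [hxX] with ω h
      exact hXcvx.sum_mem hq0 hq1 fun k hk => h k (Finset.mem_Icc.1 hk).1
  have hgall : ∀ᵐ ω ∂P, ∀ k, 1 ≤ k → ∀ i, |g k ω i| ≤ Ginf := by
    rw [ae_all_iff]; intro k
    by_cases hk : 1 ≤ k
    · filter_upwards [hGinf k hk] with ω h _ using h
    · exact Filter.Eventually.of_forall fun ω h => absurd h hk
  have hGnn : 0 ≤ Ginf := by
    obtain ⟨ω, h⟩ := hgall.exists
    exact (abs_nonneg _).trans (h 1 le_rfl ⟨0, hn⟩)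
  have hG1nn : 0 ≤ G₁ := le_trans (integral_nonneg fun ω => Finset.sum_nonneg fun i _ =>
    abs_nonneg _) (hG1 1 le_rfl)
  have hgint : ∀ k, 1 ≤ k → ∀ i, Integrable (fun ω => g k ω i) P := fun k hk i => by
    refine Integrable.of_bound ((measurable_pi_apply i).comp (hgmeas k)).aestronglyMeasurable
      Ginf ?_
    filter_upwards [hGinf k hk] with ω h using h i
  obtain ⟨⟨y, hyX, hyF⟩, hmin⟩ := hFstar
  -- conditional expectation step
  have hpull : ∀ k, 1 ≤ k → ∀ i, _ := fun k hk i =>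
    aux_pull (ℱ k) P (ℱ.le k) (fun ω => x k ω i - y i) (fun ω => g k ω i)
      (((measurable_pi_apply i).comp (hxmeas k)).sub_const _) Dinf
      (by filter_upwards [hxX' k hk] with ω h using hD _ h _ hyX i) (hgint k hk i)
  have hCint : ∀ k, 1 ≤ k → Integrable (fun ω => ∑ i, (x k ω i - y i) * g k ω i) P :=
    fun k hk => integrable_finsetSum _ fun i _ => (hpull k hk i).1
  have hFC : ∀ k, 1 ≤ k → ∫ ω, F (x k ω) ∂P - Fstar
      ≤ ∫ ω, ∑ i, (x k ω i - y i) * g k ω i ∂P := by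
    intro k hk
    rw [integral_finsetSum _ (fun i _ => (hpull k hk i).1),
      Finset.sum_congr rfl (fun i _ => (hpull k hk i).2.2.symm),
      ← integral_finsetSum _ (fun i _ => (hpull k hk i).2.1)]
    have : ∫ ω, F (x k ω) ∂P - Fstar = ∫ ω, (F (x k ω) - Fstar) ∂P := by
      rw [integral_sub (hFx k hk) (integrable_const _)]; simp
    rw [this]
    refine integral_mono_ae ((hFx k hk).sub (integrable_const _))
      (integrable_finsetSum _ (fun i _ => (hpull k hk i).2.1)) ?_
    filter_upwards [hsub k hk] with ω h
    have h1 := h y hyX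
    rw [hyF] at h1
    have h2 : ∑ i, (P[(fun ω' => g k ω' i)|ℱ k]) ω * (y i - x k ω i)
        = - ∑ i, (x k ω i - y i) * (P[(fun ω' => g k ω' i)|ℱ k]) ω := by
      rw [← Finset.sum_neg_distrib]
      exact Finset.sum_congr rfl fun i _ => by ring
    rw [h2] at h1
    show F (x k ω) - Fstar ≤ ∑ i, (x k ω i - y i) * (P[(fun ω' => g k ω' i)|ℱ k]) ω
    linarith
  -- pathwise estimate
  have hpath : ∀ᵐ ω ∂P,
      (1 - β₁) * ∑ k ∈ Finset.Icc 1 K, auxW β₁ a K k * ∑ i, (x k ω i - y i) * g k ω i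
      ≤ 1/2 * (n * Dinf ^ 2 * Ginf) + 1/2 * (a / (1 - β₁)) ^ 2 *
        ∑ k ∈ Finset.Icc 1 K, ∑ i, auxR β₁ c (fun k => g k ω i) k := by
    filter_upwards [hgall, hxX, hopt] with ω hgω hxω hoω
    have hvnn : ∀ k i, 0 ≤ v k ω i := by
      intro k i
      induction k with
      | zero => rw [hv0]
      | succ k ih => rw [hv]; positivity
    have hvle : ∀ k i, v k ω i ≤ Ginf ^ 2 := by
      intro k i
      induction k with
      | zero => rw [hv0]; positivity
      | succ k ih =>
        rw [hv]
        have : g (k+1) ω i ^ 2 ≤ Ginf ^ 2 := by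
          rw [← sq_abs]; gcongr; exact hgω (k+1) (by omega) i
        nlinarith [mul_le_mul_of_nonneg_left ih hc0, mul_le_mul_of_nonneg_left this hcc.le]
    have hvhle : ∀ k i, vhat k ω i ≤ Ginf ^ 2 := by
      intro k i
      induction k with
      | zero => rw [hvhat0]; positivity
      | succ k ih => rw [hvhat]; exact max_le ih (hvle _ _)
    refine aux_core β₁ c a Dinf Ginf hb0 hb1 hc ha.le (fun k => g k ω) (fun k => m k ω)
      (fun k i => Real.sqrt (vhat k ω i)) (fun k => x k ω) y (fun k i => Real.sqrt_nonneg _)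
      (fun i => by simp [hvhat0]) (fun k i => ?_) (fun k i => ?_) (hm0 ω) (fun k i => hm k ω i)
      (fun k i hk => hD _ (hxω k hk) _ hyX i) (fun k i => ?_) (fun k hk => ?_) K
    · apply Real.sqrt_le_sqrt
      rw [hvhat]; exact le_max_left _ _
    · apply Real.le_sqrt_of_sq_le
      rw [hvhat]
      refine le_trans ?_ (le_max_right _ _)
      rw [hv, mul_pow, hcsq, sq_abs]
      nlinarith [mul_nonneg hc0 (hvnn k i)]
    · exact (Real.sqrt_le_left hGnn).2 (hvhle k i)
    · have := hoω k hk y hyX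
      rwa [hαseq k hk] at this
  -- integrate
  have hRint : ∀ k, Integrable (fun ω => ∑ i, auxR β₁ c (fun k => g k ω i) k) P := fun k =>
    integrable_finsetSum _ fun i _ =>
      aux_R_int P (fun k ω => g k ω i) (fun k hk => hgint k hk i) k
  have hLint : ∀ k ∈ Finset.Icc 1 K,
      Integrable (fun ω => auxW β₁ a K k * ∑ i, (x k ω i - y i) * g k ω i) P :=
    fun k hk => (hCint k (Finset.mem_Icc.1 hk).1).const_mul _
  have hI := integral_mono_ae ((integrable_finsetSum _ hLint).const_mul (1 - β₁))
    ((integrable_const _).add ((integrable_finsetSum (Finset.Icc 1 K)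
      (fun k _ => hRint k)).const_mul _)) hpath
  simp only [Pi.add_apply] at hI
  rw [integral_const_mul, integral_finsetSum _ hLint, integral_add (integrable_const _)
    ((integrable_finsetSum (Finset.Icc 1 K) (fun k _ => hRint k)).const_mul _),
    integral_const, integral_const_mul, integral_finsetSum _ (fun k _ => hRint k)] at hI
  simp only [integral_const_mul, integral_const, probReal_univ, one_smul] at hI
  have hR : ∑ k ∈ Finset.Icc 1 K, ∫ ω, ∑ i, auxR β₁ c (fun k => g k ω i) k ∂P
      ≤ K * (G₁ / c) := by
    have := Finset.sum_le_card_nsmul (Finset.Icc 1 K)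
      (fun k => ∫ ω, ∑ i, auxR β₁ c (fun k => g k ω i) k ∂P) (G₁ / c)
      (fun k _ => aux_R_le P hb0 hb1 hc g hgint hG1nn hG1 k)
    simpa using this
  -- Jensen
  have hJ : ∫ ω, F (∑ k ∈ Finset.Icc 1 K, (auxW β₁ a K k / S) • x k ω) ∂P
      ≤ ∑ k ∈ Finset.Icc 1 K, auxW β₁ a K k / S * ∫ ω, F (x k ω) ∂P := by
    have hi : ∀ k ∈ Finset.Icc 1 K, Integrable (fun ω => auxW β₁ a K k / S * F (x k ω)) P :=
      fun k hk => (hFx k (Finset.mem_Icc.1 hk).1).const_mul _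
    simp only [← integral_const_mul]
    rw [← integral_finsetSum _ hi]
    refine integral_mono hFbar (integrable_finsetSum _ hi) fun ω => ?_
    exact hF.map_sum_le hq0 hq1 (fun _ _ => Set.mem_univ _)
  have hFS : ∑ k ∈ Finset.Icc 1 K, auxW β₁ a K k / S * ∫ ω, F (x k ω) ∂P - Fstar
      ≤ (∑ k ∈ Finset.Icc 1 K, auxW β₁ a K k * ∫ ω, ∑ i, (x k ω i - y i) * g k ω i ∂P) / S := by
    have : Fstar = ∑ k ∈ Finset.Icc 1 K, auxW β₁ a K k / S * Fstar := by
      rw [← Finset.sum_mul, hq1, one_mul]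
    rw [this, ← Finset.sum_sub_distrib, Finset.sum_div]
    refine Finset.sum_le_sum fun k hk => ?_
    have := mul_le_mul_of_nonneg_left (hFC k (Finset.mem_Icc.1 hk).1) (hq0 k hk)
    calc _ = auxW β₁ a K k / S * (∫ ω, F (x k ω) ∂P - Fstar) := by ring
      _ ≤ _ := this
      _ = _ := by ring
  refine (sub_le_sub_right hJ Fstar).trans (hFS.trans ?_)
  set T := ∑ k ∈ Finset.Icc 1 K, auxW β₁ a K k * ∫ ω, ∑ i, (x k ω i - y i) * g k ω i ∂P
  set N := n * Dinf^2 * Ginf + (α^2 / (1 - β₁)^2) * (G₁ / c) with hN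
  have hNnn : 0 ≤ N := by positivity
  have hTN : (1 - β₁) * T ≤ N / 2 := by
    have h3 : 1/2 * (a / (1 - β₁)) ^ 2 *
        ∑ k ∈ Finset.Icc 1 K, ∫ ω, ∑ i, auxR β₁ c (fun k => g k ω i) k ∂P
        ≤ 1/2 * (a / (1 - β₁)) ^ 2 * (K * (G₁ / c)) := by gcongr
    have h4 : 1/2 * (a / (1 - β₁)) ^ 2 * (K * (G₁ / c))
        = 1/2 * ((α^2 / (1 - β₁)^2) * (G₁ / c)) := by
      rw [← haK2, div_pow]; ring
    rw [hN]; linarith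
  calc T / S ≤ (N / (2 * (1 - β₁))) / S := by
        gcongr
        rw [le_div_iff₀ (by positivity)]; linarith
    _ ≤ (N / (2 * (1 - β₁))) / (α * Real.sqrt K) := by gcongr
    _ = _ := by rw [div_div]; congr 1; ring
end

section
/- Let K ≥ 1, α > 0, and take step sizes α_k = α/√k for all k ≥ 1. Define weights w_k = ∑_{j=k}^{K} α_j β₁^{j−k} and the averaged iterate x̄^(K) = (∑_{k=1}^{K} w_k x^(k)) / (∑_{k=1}^{K} w_k). Then E[F(x̄^(K))] − F* ≤ ( n·D∞²·G∞ + (α²(1 + log K)/(1−β₁)²)·G₁/√(1−β₂) ) / ( 4α·(√(K+1) − 1)·(1−β₁) ). -/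
open MeasureTheory Finset

/-- the weights -/
noncomputable def wt (a : ℕ → ℝ) (b : ℝ) (K k : ℕ) : ℝ := ∑ j ∈ Finset.Icc k K, a j * b ^ (j - k)

/-- majorant of `m² / √v̂` -/
noncomputable def rr (b c : ℝ) (g : ℕ → ℝ) : ℕ → ℝ
  | 0 => 0
  | k+1 => b * rr b c g k + (1 - b) * (|g (k+1)| / c)

lemma wt_rec (a : ℕ → ℝ) (b : ℝ) (K k : ℕ) (hk : k ≤ K) :
    wt a b K k = a k + b * wt a b K (k+1) := by
  unfold wt
  have : Finset.Icc k K = insert k (Finset.Icc (k+1) K) := by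
    ext j; simp only [Finset.mem_Icc, Finset.mem_insert]; omega
  rw [this, Finset.sum_insert (by simp), Finset.mul_sum]
  congr 1
  · simp
  · apply Finset.sum_congr rfl
    intro j hj
    rw [Finset.mem_Icc] at hj
    have : j - k = (j - (k+1)) + 1 := by omega
    rw [this, pow_succ]; ring

lemma wt_last (a : ℕ → ℝ) (b : ℝ) (K : ℕ) : wt a b K (K+1) = 0 := by
  unfold wt; simp

lemma wt_nonneg (a : ℕ → ℝ) (b : ℝ) (hb : 0 ≤ b) (K k : ℕ) (hk : 1 ≤ k)
    (ha : ∀ k, 1 ≤ k → 0 ≤ a k) : 0 ≤ wt a b K k := by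
  unfold wt
  apply Finset.sum_nonneg
  intro j hj
  rw [Finset.mem_Icc] at hj
  exact mul_nonneg (ha j (by omega)) (pow_nonneg hb _)

lemma wt_le (a : ℕ → ℝ) (b : ℝ) (hb : 0 ≤ b) (hb1 : b < 1) (K : ℕ)
    (ha : ∀ k, 1 ≤ k → 0 ≤ a k) (hanti : ∀ k, 1 ≤ k → a (k+1) ≤ a k) :
    ∀ d k, 1 ≤ k → k + d = K + 1 → wt a b K k ≤ a k / (1 - b) := by
  have h1 : 0 < 1 - b := by linarith
  intro d
  induction d with
  | zero =>
    intro k hk h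
    obtain rfl : k = K + 1 := by omega
    rw [wt_last]
    exact div_nonneg (ha _ hk) h1.le
  | succ d ih =>
    intro k hk h
    rw [wt_rec a b K k (by omega)]
    have h2 := ih (k+1) (by omega) (by omega)
    have h3 : wt a b K (k+1) ≤ a k / (1 - b) :=
      h2.trans (div_le_div_of_nonneg_right (hanti k hk) h1.le)
    calc a k + b * wt a b K (k+1) ≤ a k + b * (a k / (1 - b)) := by gcongr
      _ = a k / (1 - b) := by field_simp; ring

lemma sum_Icc_range (f : ℕ → ℝ) (K : ℕ) :
    ∑ k ∈ Finset.Icc 1 K, f k = ∑ k ∈ Finset.range K, f (k+1) := by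
  induction K with
  | zero => simp
  | succ K ih => rw [Finset.sum_Icc_succ_top (by omega), ih, Finset.sum_range_succ]

lemma rr_nonneg (b c : ℝ) (hb : 0 ≤ b) (hb1 : b < 1) (hc : 0 < c) (g : ℕ → ℝ) (k : ℕ) :
    0 ≤ rr b c g k := by
  induction k with
  | zero => simp [rr]
  | succ k ih =>
    have : 0 ≤ 1 - b := by linarith
    simp only [rr]; positivity

lemma m_sq_le (b b2 : ℝ) (hb : 0 ≤ b) (hb1 : b < 1) (hb2 : 0 ≤ b2) (hb21 : b2 < 1)
    (g m v vh : ℕ → ℝ) (hm0 : m 0 = 0) (hv0 : v 0 = 0)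
    (hm : ∀ k, m (k+1) = b * m k + (1 - b) * g (k+1))
    (hv : ∀ k, v (k+1) = b2 * v k + (1 - b2) * (g (k+1))^2)
    (hvh : ∀ k, vh (k+1) = max (vh k) (v (k+1))) (k : ℕ) :
    (m k)^2 ≤ Real.sqrt (vh k) * rr b (Real.sqrt (1 - b2)) g k := by
  have hc : 0 < Real.sqrt (1 - b2) := Real.sqrt_pos.2 (by linarith)
  have h1 : 0 < 1 - b := by linarith
  have hvn : ∀ k, 0 ≤ v k := by
    intro k
    induction k with
    | zero => rw [hv0]
    | succ k ih =>
      have : 0 ≤ 1 - b2 := by linarith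
      rw [hv]; positivity
  induction k with
  | zero => simp [hm0, rr]
  | succ k ih =>
    have hr := rr_nonneg b _ hb hb1 hc g k
    have hs : Real.sqrt (vh k) ≤ Real.sqrt (vh (k+1)) :=
      Real.sqrt_le_sqrt (by rw [hvh]; exact le_max_left _ _)
    have hgs : |g (k+1)| * Real.sqrt (1 - b2) ≤ Real.sqrt (vh (k+1)) := by
      apply Real.le_sqrt_of_sq_le
      rw [mul_pow, sq_abs, Real.sq_sqrt (by linarith)]
      calc g (k+1)^2 * (1 - b2) ≤ v (k+1) := by
            rw [hv]; nlinarith [mul_nonneg hb2 (hvn k)]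
        _ ≤ _ := by rw [hvh]; exact le_max_right _ _
    have hg2 : (g (k+1))^2 ≤ Real.sqrt (vh (k+1)) * (|g (k+1)| / Real.sqrt (1 - b2)) := by
      rw [← mul_div_assoc, le_div_iff₀ hc, ← sq_abs]
      nlinarith [mul_le_mul_of_nonneg_right hgs (abs_nonneg (g (k+1)))]
    have hconv : (m (k+1))^2 ≤ b * (m k)^2 + (1 - b) * (g (k+1))^2 := by
      rw [hm]; nlinarith [mul_nonneg (mul_nonneg hb h1.le) (sq_nonneg (m k - g (k+1)))]
    have hmk : (m k)^2 ≤ Real.sqrt (vh (k+1)) * rr b (Real.sqrt (1 - b2)) g k :=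
      ih.trans (mul_le_mul_of_nonneg_right hs hr)
    simp only [rr]
    nlinarith [mul_le_mul_of_nonneg_left hmk hb, mul_le_mul_of_nonneg_left hg2 h1.le]

lemma vh_le (b2 : ℝ) (hb2 : 0 ≤ b2) (hb21 : b2 < 1) (G : ℝ)
    (g v vh : ℕ → ℝ) (hv0 : v 0 = 0) (hvh0 : vh 0 = 0)
    (hv : ∀ k, v (k+1) = b2 * v k + (1 - b2) * (g (k+1))^2)
    (hvh : ∀ k, vh (k+1) = max (vh k) (v (k+1)))
    (hg : ∀ k, 1 ≤ k → |g k| ≤ G) (k : ℕ) : Real.sqrt (vh k) ≤ G := by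
  have hG : 0 ≤ G := (abs_nonneg _).trans (hg 1 le_rfl)
  have h1 : ∀ k, v k ≤ G^2 := by
    intro k
    induction k with
    | zero => rw [hv0]; positivity
    | succ k ih =>
      have : (g (k+1))^2 ≤ G^2 := by
        rw [← sq_abs]; exact pow_le_pow_left₀ (abs_nonneg _) (hg _ (by omega)) 2
      rw [hv]; nlinarith
  rw [Real.sqrt_le_left hG]
  induction k with
  | zero => rw [hvh0]; positivity
  | succ k ih => rw [hvh]; exact max_le ih (h1 _)

lemma young (w m d s r : ℝ) (hs : 0 ≤ s) (hr : 0 ≤ r) (h : m^2 ≤ s * r) :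
    w * m * d ≤ (s * d^2 + w^2 * r) / 2 := by
  apply le_of_sq_le_sq _ (by positivity)
  have : (w * m * d)^2 ≤ w^2 * d^2 * (s * r) := by
    calc (w * m * d)^2 = w^2 * d^2 * m^2 := by ring
      _ ≤ _ := by gcongr
  nlinarith [sq_nonneg (s * d^2 - w^2 * r)]

lemma regret {n : ℕ} (b : ℝ) (K : ℕ) (a w : ℕ → ℝ) (D : ℝ)
    (g m s r x : ℕ → Fin n → ℝ) (y : Fin n → ℝ)
    (hw : ∀ k, k + 1 ≤ K → w (k+1) = a (k+1) + b * w (k+2))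
    (hm0 : ∀ i, m 0 i = 0) (hs0 : ∀ i, s 0 i = 0)
    (hm : ∀ k i, m (k+1) i = b * m k i + (1 - b) * g (k+1) i)
    (hs : ∀ k i, s k i ≤ s (k+1) i) (hr : ∀ k i, 0 ≤ r k i)
    (hmr : ∀ k i, (m k i)^2 ≤ s k i * r k i)
    (hD : ∀ k, 1 ≤ k → ∀ i, |x k i - y i| ≤ D)
    (hopt : ∀ k, 1 ≤ k →
      (∑ i, (x (k+1) i - y i) * (s k i * (x (k+1) i - x k i) + a k * m k i)) ≤ 0)
    (N : ℕ) (hN : N ≤ K) :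
    ∑ k ∈ Finset.range N, (1 - b) * w (k+1) * ∑ i, g (k+1) i * (x (k+1) i - y i)
      ≤ (∑ i, (b * w (N+1) * m N i * (x (N+1) i - y i)
          + (s N i * D^2 - s N i * (x (N+1) i - y i)^2) / 2))
        + ∑ k ∈ Finset.range N, (w (k+1))^2 / 2 * ∑ i, r (k+1) i := by
  have hsn : ∀ k i, 0 ≤ s k i := by
    intro k i
    induction k with
    | zero => rw [hs0]
    | succ k ih => exact ih.trans (hs k i)
  induction N with
  | zero => simp [hm0, hs0]
  | succ N ih =>
    have ih := ih (by omega)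
    rw [Finset.sum_range_succ, Finset.sum_range_succ]
    have ho := hopt (N+1) (by omega)
    have key : (1 - b) * w (N+1) * ∑ i, g (N+1) i * (x (N+1) i - y i)
        + (∑ i, (b * w (N+1) * m N i * (x (N+1) i - y i)
          + (s N i * D^2 - s N i * (x (N+1) i - y i)^2) / 2))
        ≤ (∑ i, (b * w (N+1+1) * m (N+1) i * (x (N+1+1) i - y i)
          + (s (N+1) i * D^2 - s (N+1) i * (x (N+1+1) i - y i)^2) / 2))
        + (w (N+1))^2 / 2 * ∑ i, r (N+1) i +
        (∑ i, (x (N+1+1) i - y i) *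
          (s (N+1) i * (x (N+1+1) i - x (N+1) i) + a (N+1) * m (N+1) i)) := by
      rw [Finset.mul_sum, Finset.mul_sum, ← Finset.sum_add_distrib, ← Finset.sum_add_distrib,
        ← Finset.sum_add_distrib]
      apply Finset.sum_le_sum
      intro i _
      have hy := young (w (N+1)) (m (N+1) i) (x (N+1) i - x (N+1+1) i) (s (N+1) i) (r (N+1) i)
        (hsn _ _) (hr _ _) (hmr _ _)
      have h1 : (1 - b) * w (N+1) * (g (N+1) i * (x (N+1) i - y i))
          = w (N+1) * (m (N+1) i - b * m N i) * (x (N+1) i - y i) := by rw [hm]; ring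
      have h2 : b * w (N+1+1) = w (N+1) - a (N+1) := by rw [hw N hN]; ring
      have h3 : (x (N+1) i - y i)^2 ≤ D^2 := by
        rw [← sq_abs]; exact pow_le_pow_left₀ (abs_nonneg _) (hD _ (by omega) i) 2
      have h4 := mul_le_mul_of_nonneg_left h3 (sub_nonneg.2 (hs N i))
      rw [h1, h2]
      nlinarith
    linarith

lemma sum_inv_sqrt (K : ℕ) :
    2 * (Real.sqrt (K+1) - 1) ≤ ∑ k ∈ Finset.range K, 1 / Real.sqrt ((k+1 : ℕ) : ℝ) := by
  induction K with
  | zero => simp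
  | succ K ih =>
    rw [Finset.sum_range_succ]
    push_cast at *
    have h1 : 0 < Real.sqrt ((K:ℝ)+1) := Real.sqrt_pos.2 (by positivity)
    have e1 := Real.sq_sqrt (show (0:ℝ) ≤ (K:ℝ)+1 by positivity)
    have e2 := Real.sq_sqrt (show (0:ℝ) ≤ (K:ℝ)+1+1 by positivity)
    have : 2 * (Real.sqrt ((K:ℝ)+1+1) - Real.sqrt ((K:ℝ)+1)) ≤ 1 / Real.sqrt ((K:ℝ)+1) := by
      rw [le_div_iff₀ h1]
      nlinarith [sq_nonneg (Real.sqrt ((K:ℝ)+1+1) - Real.sqrt ((K:ℝ)+1))]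
    linarith

lemma sum_inv (K : ℕ) :
    ∑ k ∈ Finset.range K, 1 / (((k+1 : ℕ) : ℝ)) ≤ 1 + Real.log K := by
  have := harmonic_le_one_add_log K
  unfold harmonic at this
  push_cast at this ⊢
  simpa using this


/-- convex case without delay, diminishing step size: with `α_k = α/√k`,
`w_k = ∑_{j=k}^K α_j β₁^{j−k}` and `x̄^(K) = (∑_k w_k x^(k))/(∑_k w_k)`,
`E[F(x̄^(K))] − F* ≤ (n D∞² G∞ + (α²(1+log K)/(1−β₁)²) G₁/√(1−β₂)) / (4α(√(K+1)−1)(1−β₁))`. -/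
theorem stmt1
    {n : ℕ} (hn : 1 ≤ n)
    (β₁ β₂ : ℝ) (hβ₁ : β₁ ∈ Set.Ico (0:ℝ) 1) (hβ₂ : β₂ ∈ Set.Ico (0:ℝ) 1)
    {Ω : Type*} [mΩ : MeasurableSpace Ω] (P : Measure Ω) [IsProbabilityMeasure P]
    (ℱ : Filtration ℕ mΩ)
    (g m v vhat x : ℕ → Ω → (Fin n → ℝ))
    (hgmeas : ∀ k, Measurable (g k))
    (hxmeas : ∀ k, Measurable[ℱ k] (x k))
    (hm0 : ∀ ω i, m 0 ω i = 0) (hv0 : ∀ ω i, v 0 ω i = 0) (hvhat0 : ∀ ω i, vhat 0 ω i = 0)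
    (hm : ∀ k ω i, m (k+1) ω i = β₁ * m k ω i + (1 - β₁) * g (k+1) ω i)
    (hv : ∀ k ω i, v (k+1) ω i = β₂ * v k ω i + (1 - β₂) * (g (k+1) ω i)^2)
    (hvhat : ∀ k ω i, vhat (k+1) ω i = max (vhat k ω i) (v (k+1) ω i))
    (X : Set (Fin n → ℝ)) (hXne : X.Nonempty) (hXcpt : IsCompact X) (hXcvx : Convex ℝ X)
    (Dinf Ginf G₁ : ℝ)
    (hD : ∀ p ∈ X, ∀ q ∈ X, ∀ i, |p i - q i| ≤ Dinf)
    (hGinf : ∀ k, 1 ≤ k → ∀ᵐ ω ∂P, ∀ i, |g k ω i| ≤ Ginf)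
    (hG1 : ∀ k, 1 ≤ k → ∫ ω, (∑ i, |g k ω i|) ∂P ≤ G₁)
    (F : (Fin n → ℝ) → ℝ) (hF : ConvexOn ℝ Set.univ F)
    (Fstar : ℝ) (hFstar : IsLeast (F '' X) Fstar)
    (K : ℕ) (hK : 1 ≤ K) (α : ℝ) (hα : 0 < α)
    (αseq : ℕ → ℝ) (hαseq : ∀ k, 1 ≤ k → αseq k = α / Real.sqrt k)
    (hxX : ∀ᵐ ω ∂P, ∀ k, 1 ≤ k → x k ω ∈ X)
    (hopt : ∀ᵐ ω ∂P, ∀ k, 1 ≤ k → ∀ y ∈ X,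
      (∑ i, (x (k+1) ω i - y i) *
        (Real.sqrt (vhat k ω i) * (x (k+1) ω i - x k ω i) + αseq k * m k ω i)) ≤ 0)
    (hsub : ∀ k, 1 ≤ k → ∀ᵐ ω ∂P, ∀ y ∈ X,
      F y ≥ F (x k ω) + ∑ i, (P[(fun ω' => g k ω' i)|ℱ k]) ω * (y i - x k ω i)) :
    (∫ ω, F (fun i =>
        (∑ k ∈ Finset.Icc 1 K,
            (∑ j ∈ Finset.Icc k K, αseq j * β₁ ^ (j - k)) * x k ω i) /
        (∑ k ∈ Finset.Icc 1 K, ∑ j ∈ Finset.Icc k K, αseq j * β₁ ^ (j - k))) ∂P) - Fstar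
      ≤ (n * Dinf^2 * Ginf + (α^2 * (1 + Real.log K) / (1 - β₁)^2) * (G₁ / Real.sqrt (1 - β₂)))
          / (4 * α * (Real.sqrt (K + 1) - 1) * (1 - β₁)) := by
  obtain ⟨hb0, hb1⟩ := hβ₁
  obtain ⟨hb20, hb21⟩ := hβ₂
  obtain ⟨⟨y, hyX, hyF⟩, hmin⟩ := hFstar
  have h1b : 0 < 1 - β₁ := by linarith
  set c := Real.sqrt (1 - β₂) with hcdef
  have hc : 0 < c := Real.sqrt_pos.2 (by linarith)
  have hapos : ∀ k, 1 ≤ k → 0 < αseq k := by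
    intro k hk
    rw [hαseq k hk]
    exact div_pos hα (Real.sqrt_pos.2 (by exact_mod_cast hk))
  have hanti : ∀ k, 1 ≤ k → αseq (k+1) ≤ αseq k := by
    intro k hk
    rw [hαseq k hk, hαseq (k+1) (by omega)]
    have : 0 < Real.sqrt k := Real.sqrt_pos.2 (by exact_mod_cast hk)
    apply div_le_div_of_nonneg_left hα.le this
    apply Real.sqrt_le_sqrt
    push_cast; linarith
  change (∫ ω, F (fun i => (∑ k ∈ Finset.Icc 1 K, wt αseq β₁ K k * x k ω i) /
    (∑ k ∈ Finset.Icc 1 K, wt αseq β₁ K k)) ∂P) - Fstar ≤ _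
  set w := wt αseq β₁ K with hwdef
  have hw0 : ∀ k, 1 ≤ k → 0 ≤ w k := fun k hk =>
    wt_nonneg αseq β₁ hb0 K k hk (fun k hk => (hapos k hk).le)
  have hwrec : ∀ k, k + 1 ≤ K → w (k+1) = αseq (k+1) + β₁ * w (k+2) := fun k hk =>
    wt_rec αseq β₁ K (k+1) hk
  have hwge : ∀ k, 1 ≤ k → k ≤ K → αseq k ≤ w k := by
    intro k hk hkK
    have h := wt_rec αseq β₁ K k hkK
    have := mul_nonneg hb0 (hw0 (k+1) (by omega))
    rw [hwdef] at *
    linarith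
  have hwle : ∀ k, 1 ≤ k → k ≤ K → w k ≤ αseq k / (1 - β₁) := fun k hk hkK =>
    wt_le αseq β₁ hb0 hb1 K (fun k hk => (hapos k hk).le) hanti (K + 1 - k) k hk (by omega)
  -- lower bound on the total weight
  set S := Real.sqrt (K + 1) - 1 with hSdef
  have hS : 0 < S := by
    have : (1:ℝ) < Real.sqrt (K + 1) := by
      rw [Real.lt_sqrt (by norm_num)]
      have : (1:ℝ) ≤ K := by exact_mod_cast hK
      linarith
    rw [hSdef]; linarith
  set W := ∑ k ∈ Finset.Icc 1 K, w k with hWdef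
  have hWS : 2 * α * S ≤ W := by
    have h := sum_inv_sqrt K
    calc 2 * α * S = α * (2 * S) := by ring
      _ ≤ α * ∑ k ∈ Finset.range K, 1 / Real.sqrt ((k+1 : ℕ) : ℝ) := by gcongr
      _ = ∑ k ∈ Finset.range K, αseq (k+1) := by
          rw [Finset.mul_sum]
          apply Finset.sum_congr rfl
          intro k _
          rw [hαseq (k+1) (by omega)]; ring
      _ ≤ ∑ k ∈ Finset.range K, w (k+1) := by
          apply Finset.sum_le_sum
          intro k hk
          rw [Finset.mem_range] at hk
          exact hwge _ (by omega) (by omega)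
      _ = W := by rw [hWdef, sum_Icc_range]
  have hW : 0 < W := lt_of_lt_of_le (by positivity) hWS
  -- continuity and boundedness of F
  have hFc : Continuous F := by
    rw [← continuousOn_univ]
    exact hF.continuousOn isOpen_univ
  obtain ⟨C, hC⟩ := (hXcpt.image hFc).isBounded.exists_norm_le
  have hFb : ∀ p ∈ X, ‖F p‖ ≤ C := fun p hp => hC _ ⟨p, hp, rfl⟩
  have hxm : ∀ k, Measurable (x k) := fun k => (hxmeas k).mono (ℱ.le k) le_rfl
  have hFx : ∀ k, 1 ≤ k → Integrable (fun ω => F (x k ω)) P := by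
    intro k hk
    refine Integrable.of_bound (hFc.measurable.comp (hxm k)).aestronglyMeasurable C ?_
    filter_upwards [hxX] with ω hω
    exact hFb _ (hω k hk)
  have hgm : ∀ k i, Measurable (fun ω => g k ω i) := fun k i =>
    (measurable_pi_apply i).comp (hgmeas k)
  have hgint : ∀ k, 1 ≤ k → ∀ i, Integrable (fun ω => g k ω i) P := by
    intro k hk i
    refine Integrable.of_bound (hgm k i).aestronglyMeasurable Ginf ?_
    filter_upwards [hGinf k hk] with ω hω
    exact hω i
  have hxyint : ∀ k, 1 ≤ k → ∀ i, Integrable (fun ω => g k ω i * (x k ω i - y i)) P := by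
    intro k hk i
    refine (hgint k hk i).mul_bdd (c := Dinf) ?_ ?_
    · exact (((measurable_pi_apply i).comp (hxm k)).sub_const _).aestronglyMeasurable
    · filter_upwards [hxX] with ω hω
      exact hD _ (hω k hk) _ hyX i
  have hinner : ∀ k, 1 ≤ k → Integrable (fun ω => ∑ i, g k ω i * (x k ω i - y i)) P :=
    fun k hk => integrable_finsetSum _ (fun i _ => hxyint k hk i)
  -- conditional expectation step
  have hcond : ∀ k, 1 ≤ k →
      (∫ ω, F (x k ω) ∂P) - Fstar ≤ ∫ ω, ∑ i, g k ω i * (x k ω i - y i) ∂P := by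
    intro k hk
    have hpull : ∀ i, P[(fun ω => g k ω i * (x k ω i - y i))|ℱ k] =ᵐ[P]
        fun ω => (P[(fun ω' => g k ω' i)|ℱ k]) ω * (x k ω i - y i) := by
      intro i
      refine condExp_mul_of_stronglyMeasurable_right (f := fun ω => g k ω i)
        (g := fun ω => x k ω i - y i) ?_ (hxyint k hk i) (hgint k hk i)
      exact (((measurable_pi_apply i).comp (hxmeas k)).sub_const _).stronglyMeasurable
    have hint : ∀ i, Integrable
        (fun ω => (P[(fun ω' => g k ω' i)|ℱ k]) ω * (x k ω i - y i)) P :=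
      fun i => integrable_condExp.congr (hpull i)
    have heq : ∫ ω, ∑ i, g k ω i * (x k ω i - y i) ∂P
        = ∫ ω, ∑ i, (P[(fun ω' => g k ω' i)|ℱ k]) ω * (x k ω i - y i) ∂P := by
      rw [integral_finsetSum _ (fun i _ => hxyint k hk i), integral_finsetSum _ (fun i _ => hint i)]
      apply Finset.sum_congr rfl
      intro i _
      rw [← integral_congr_ae (hpull i), integral_condExp (ℱ.le k)]
    rw [heq]
    have : (∫ ω, F (x k ω) ∂P) - Fstar = ∫ ω, (F (x k ω) - Fstar) ∂P := by
      rw [integral_sub (hFx k hk) (integrable_const _)]; simp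
    rw [this]
    apply integral_mono_ae ((hFx k hk).sub (integrable_const _))
      (integrable_finsetSum _ (fun i _ => hint i))
    filter_upwards [hsub k hk] with ω hω
    have h := hω y hyX
    rw [hyF] at h
    have e : ∑ i, (P[(fun ω' => g k ω' i)|ℱ k]) ω * (x k ω i - y i)
        = - ∑ i, (P[(fun ω' => g k ω' i)|ℱ k]) ω * (y i - x k ω i) := by
      rw [← Finset.sum_neg_distrib]
      apply Finset.sum_congr rfl
      intro i _; ring
    simp only [Pi.sub_apply]
    rw [e]; linarith
  -- the majorant
  have hrint : ∀ k i, Integrable (fun ω => rr β₁ c (fun j => g j ω i) k) P := by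
    intro k i
    induction k with
    | zero => simp [rr]
    | succ k ih =>
      simp only [rr]
      exact (ih.const_mul _).add ((((hgint (k+1) (by omega) i).abs).div_const c).const_mul _)
  have hG1' : 0 ≤ G₁ :=
    le_trans (integral_nonneg (fun ω => Finset.sum_nonneg (fun i _ => abs_nonneg _)))
      (hG1 1 le_rfl)
  have hrsum : ∀ k, ∫ ω, ∑ i, rr β₁ c (fun j => g j ω i) k ∂P ≤ G₁ / c := by
    intro k
    induction k with
    | zero => simp [rr]; positivity
    | succ k ih =>
      have e : ∀ ω, ∑ i, rr β₁ c (fun j => g j ω i) (k+1)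
          = β₁ * ∑ i, rr β₁ c (fun j => g j ω i) k + (1 - β₁) / c * ∑ i, |g (k+1) ω i| := by
        intro ω
        rw [Finset.mul_sum, Finset.mul_sum, ← Finset.sum_add_distrib]
        apply Finset.sum_congr rfl
        intro i _
        simp only [rr]; ring
      simp_rw [e]
      rw [integral_add, integral_const_mul, integral_const_mul]
      · calc _ ≤ β₁ * (G₁ / c) + (1 - β₁) / c * G₁ := by
              gcongr
              exact hG1 _ (by omega)
          _ = G₁ / c := by ring
      · exact (integrable_finsetSum _ (fun i _ => hrint k i)).const_mul _
      · exact (integrable_finsetSum _ (fun i _ => (hgint (k+1) (by omega) i).abs)).const_mul _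
  -- pathwise regret bound
  have hGall : ∀ᵐ ω ∂P, ∀ k, 1 ≤ k → ∀ i, |g k ω i| ≤ Ginf := by
    rw [ae_all_iff]
    intro k
    by_cases hk : 1 ≤ k
    · filter_upwards [hGinf k hk] with ω hω _
      exact hω
    · exact Filter.Eventually.of_forall (fun ω h => absurd h hk)
  have hpath : ∀ᵐ ω ∂P,
      ∑ k ∈ Finset.range K, (1 - β₁) * w (k+1) * ∑ i, g (k+1) ω i * (x (k+1) ω i - y i)
      ≤ n * Dinf^2 * Ginf / 2
        + ∑ k ∈ Finset.range K, (w (k+1))^2 / 2 *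
          ∑ i, rr β₁ c (fun j => g j ω i) (k+1) := by
    filter_upwards [hxX, hopt, hGall] with ω h1 h2 h3
    have h := regret β₁ K αseq w Dinf (fun k i => g k ω i) (fun k i => m k ω i)
      (fun k i => Real.sqrt (vhat k ω i)) (fun k i => rr β₁ c (fun j => g j ω i) k)
      (fun k i => x k ω i) y hwrec (hm0 ω) (fun i => by simp [hvhat0]) (fun k i => hm k ω i)
      (fun k i => Real.sqrt_le_sqrt (by rw [hvhat]; exact le_max_left _ _))
      (fun k i => rr_nonneg _ _ hb0 hb1 hc _ _)
      (fun k i => m_sq_le β₁ β₂ hb0 hb1 hb20 hb21 (fun k => g k ω i) (fun k => m k ω i)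
        (fun k => v k ω i) (fun k => vhat k ω i) (hm0 ω i) (hv0 ω i)
        (fun k => hm k ω i) (fun k => hv k ω i) (fun k => hvhat k ω i) k)
      (fun k hk i => hD _ (h1 k hk) _ hyX i) (fun k hk => h2 k hk y hyX) K le_rfl
    refine h.trans (add_le_add_left ?_ _)
    have hwl : w (K+1) = 0 := wt_last _ _ _
    calc _ ≤ ∑ i : Fin n, Ginf * Dinf^2 / 2 := by
          apply Finset.sum_le_sum
          intro i _
          have hv1 := vh_le β₂ hb20 hb21 Ginf (fun k => g k ω i)
            (fun k => v k ω i) (fun k => vhat k ω i) (hv0 ω i) (hvhat0 ω i)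
            (fun k => hv k ω i) (fun k => hvhat k ω i) (fun k hk => h3 k hk i) K
          have hv2 := mul_le_mul_of_nonneg_right hv1 (sq_nonneg Dinf)
          have hv3 := mul_nonneg (Real.sqrt_nonneg (vhat K ω i)) (sq_nonneg (x (K+1) ω i - y i))
          simp only [hwl]
          linarith
      _ = n * Dinf^2 * Ginf / 2 := by simp; ring
  have hsumR : ∀ k, Integrable (fun ω => ∑ i, rr β₁ c (fun j => g j ω i) k) P :=
    fun k => integrable_finsetSum _ (fun i _ => hrint k i)
  have hexp : ∑ k ∈ Finset.range K, (1 - β₁) * w (k+1) *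
        ∫ ω, ∑ i, g (k+1) ω i * (x (k+1) ω i - y i) ∂P
      ≤ n * Dinf^2 * Ginf / 2
        + ∑ k ∈ Finset.range K, (w (k+1))^2 / 2 *
          ∫ ω, ∑ i, rr β₁ c (fun j => g j ω i) (k+1) ∂P := by
    have hI1 : ∀ k ∈ Finset.range K, Integrable (fun ω => (1 - β₁) * w (k+1) *
        ∑ i, g (k+1) ω i * (x (k+1) ω i - y i)) P :=
      fun k _ => (hinner (k+1) (by omega)).const_mul _
    have hI2 : ∀ k ∈ Finset.range K, Integrable (fun ω => (w (k+1))^2 / 2 *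
          ∑ i, rr β₁ c (fun j => g j ω i) (k+1)) P :=
      fun k _ => (hsumR (k+1)).const_mul _
    have h := integral_mono_ae (integrable_finsetSum _ hI1)
      ((integrable_const _).add (integrable_finsetSum _ hI2)) hpath
    simp only [Pi.add_apply] at h
    rw [integral_add (integrable_const _) (integrable_finsetSum _ hI2),
      integral_finsetSum _ hI1, integral_finsetSum _ hI2] at h
    simp_rw [integral_const_mul] at h
    simpa using h
  -- Jensen
  have hJ : ∀ ω, F (fun i => (∑ k ∈ Finset.Icc 1 K, w k * x k ω i) / W)
      ≤ (∑ k ∈ Finset.Icc 1 K, w k * F (x k ω)) / W := by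
    intro ω
    have h := hF.map_centerMass_le (t := Finset.Icc 1 K) (w := w) (p := fun k => x k ω)
      (fun k hk => hw0 k (Finset.mem_Icc.1 hk).1) hW (fun _ _ => Set.mem_univ _)
    have e1 : (Finset.Icc 1 K).centerMass w (fun k => x k ω)
        = fun i => (∑ k ∈ Finset.Icc 1 K, w k * x k ω i) / W := by
      ext i
      simp [Finset.centerMass, Finset.sum_apply, ← hWdef]
      ring
    rw [e1] at h
    refine h.trans (le_of_eq ?_)
    simp [Finset.centerMass, ← hWdef]
    ring
  have hxbm : Measurable (fun ω => (fun i => (∑ k ∈ Finset.Icc 1 K, w k * x k ω i) / W)) := by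
    apply measurable_pi_lambda
    intro i
    refine Measurable.div_const (Finset.measurable_sum _ (fun k _ => ?_)) _
    exact ((measurable_pi_apply i).comp (hxm k)).const_mul _
  have hFxb : Integrable (fun ω => F (fun i => (∑ k ∈ Finset.Icc 1 K, w k * x k ω i) / W)) P := by
    refine Integrable.of_bound (hFc.measurable.comp hxbm).aestronglyMeasurable C ?_
    filter_upwards [hxX] with ω hω
    apply hFb
    have h := hXcvx.centerMass_mem (t := Finset.Icc 1 K) (w := w) (z := fun k => x k ω)
      (fun k hk => hw0 k (Finset.mem_Icc.1 hk).1) hW (fun k hk => hω k (Finset.mem_Icc.1 hk).1)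
    have e1 : (Finset.Icc 1 K).centerMass w (fun k => x k ω)
        = fun i => (∑ k ∈ Finset.Icc 1 K, w k * x k ω i) / W := by
      ext i
      simp [Finset.centerMass, Finset.sum_apply, ← hWdef]
      ring
    rwa [e1] at h
  set E := ∫ ω, F (fun i => (∑ k ∈ Finset.Icc 1 K, w k * x k ω i) / W) ∂P with hEdef
  have hI3 : ∀ k ∈ Finset.Icc 1 K, Integrable (fun ω => w k * F (x k ω)) P :=
    fun k hk => (hFx k (Finset.mem_Icc.1 hk).1).const_mul _
  have hEle : W * E ≤ ∑ k ∈ Finset.range K, w (k+1) * ∫ ω, F (x (k+1) ω) ∂P := by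
    have h := integral_mono hFxb ((integrable_finsetSum _ hI3).div_const W) hJ
    rw [integral_div, integral_finsetSum _ hI3, le_div_iff₀ hW] at h
    simp_rw [integral_const_mul] at h
    rw [sum_Icc_range] at h
    rw [mul_comm]; exact h
  have hgap : W * (E - Fstar) ≤ ∑ k ∈ Finset.range K, w (k+1) *
        ∫ ω, ∑ i, g (k+1) ω i * (x (k+1) ω i - y i) ∂P := by
    have hWr : W = ∑ k ∈ Finset.range K, w (k+1) := by rw [hWdef, sum_Icc_range]
    calc W * (E - Fstar) = W * E - W * Fstar := by ring
      _ ≤ (∑ k ∈ Finset.range K, w (k+1) * ∫ ω, F (x (k+1) ω) ∂P)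
          - (∑ k ∈ Finset.range K, w (k+1)) * Fstar := by rw [← hWr]; linarith
      _ = ∑ k ∈ Finset.range K, w (k+1) * ((∫ ω, F (x (k+1) ω) ∂P) - Fstar) := by
          rw [Finset.sum_mul, ← Finset.sum_sub_distrib]
          apply Finset.sum_congr rfl
          intro k _; ring
      _ ≤ _ := by
          apply Finset.sum_le_sum
          intro k _
          exact mul_le_mul_of_nonneg_left (hcond (k+1) (by omega)) (hw0 _ (by omega))
  -- the second-moment sum
  have hsec : ∑ k ∈ Finset.range K, (w (k+1))^2 / 2 *
          ∫ ω, ∑ i, rr β₁ c (fun j => g j ω i) (k+1) ∂P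
      ≤ (α^2 * (1 + Real.log K) / (1 - β₁)^2) * (G₁ / c) / 2 := by
    calc _ ≤ ∑ k ∈ Finset.range K, (α^2 / (1 - β₁)^2 * (G₁ / c) / 2) * (1 / ((k+1 : ℕ) : ℝ)) := by
          apply Finset.sum_le_sum
          intro k hk
          rw [Finset.mem_range] at hk
          have h1 := hwle (k+1) (by omega) (by omega)
          have h2 : (w (k+1))^2 ≤ α^2 / (1 - β₁)^2 * (1 / ((k+1 : ℕ) : ℝ)) := by
            calc (w (k+1))^2 ≤ (αseq (k+1) / (1 - β₁))^2 :=
                  pow_le_pow_left₀ (hw0 _ (by omega)) h1 2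
              _ = _ := by
                  rw [hαseq (k+1) (by omega), div_pow, div_pow, Real.sq_sqrt (by positivity)]
                  ring
          calc _ ≤ (w (k+1))^2 / 2 * (G₁ / c) :=
                mul_le_mul_of_nonneg_left (hrsum (k+1)) (by positivity)
            _ ≤ (α^2 / (1 - β₁)^2 * (1 / ((k+1 : ℕ) : ℝ))) / 2 * (G₁ / c) := by gcongr
            _ = _ := by ring
      _ = (α^2 / (1 - β₁)^2 * (G₁ / c) / 2) * ∑ k ∈ Finset.range K, (1 / ((k+1 : ℕ) : ℝ)) := by
          rw [Finset.mul_sum]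
      _ ≤ (α^2 / (1 - β₁)^2 * (G₁ / c) / 2) * (1 + Real.log K) := by
          apply mul_le_mul_of_nonneg_left (sum_inv K) (by positivity)
      _ = _ := by ring
  set B := n * Dinf^2 * Ginf + (α^2 * (1 + Real.log K) / (1 - β₁)^2) * (G₁ / c) with hB
  have hfin : (1 - β₁) * (W * (E - Fstar)) ≤ B / 2 := by
    calc _ ≤ (1 - β₁) * ∑ k ∈ Finset.range K, w (k+1) *
          ∫ ω, ∑ i, g (k+1) ω i * (x (k+1) ω i - y i) ∂P := by gcongr
      _ = ∑ k ∈ Finset.range K, (1 - β₁) * w (k+1) *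
          ∫ ω, ∑ i, g (k+1) ω i * (x (k+1) ω i - y i) ∂P := by
          rw [Finset.mul_sum]
          apply Finset.sum_congr rfl
          intro k _; ring
      _ ≤ _ := hexp
      _ ≤ B / 2 := by rw [hB]; linarith
  have hGinf0 : 0 ≤ Ginf := by
    obtain ⟨ω, hω⟩ := (hGinf 1 le_rfl).exists
    exact (abs_nonneg _).trans (hω ⟨0, hn⟩)
  have hlog : 0 ≤ Real.log K := Real.log_nonneg (by exact_mod_cast hK)
  have hB0 : 0 ≤ B := by rw [hB]; positivity
  rw [le_div_iff₀ (by positivity)]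
  rcases le_total (E - Fstar) 0 with h | h
  · exact le_trans (mul_nonpos_of_nonpos_of_nonneg h (by positivity)) hB0
  · have := mul_le_mul_of_nonneg_right hWS (mul_nonneg h h1b.le)
    nlinarith
end

section
/- Assume β₂ < 1 and E‖g^(j)‖₁ ≤ G₁ for all j ≥ 1. Then for every k ≥ 1, E[ ∑_{i=1}^{n} (m_i^(k))² / √(v̂_i^(k)) ] ≤ G₁ / √(1−β₂), where terms with v̂_i^(k) = 0 are interpreted as 0. -/
open MeasureTheory Finset

/-- If `E‖g^(j)‖₁ ≤ G₁` for all `j ≥ 1`, then for every `k ≥ 1`,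
`E[∑_i (m_i^(k))²/√(v̂_i^(k))] ≤ G₁/√(1−β₂)` (terms with `v̂_i^(k) = 0` interpreted as `0`,
matching Lean's division-by-zero convention). -/
theorem stmt8
    {n : ℕ} (hn : 1 ≤ n)
    (β₁ β₂ : ℝ) (hβ₁ : β₁ ∈ Set.Ico (0:ℝ) 1) (hβ₂ : β₂ ∈ Set.Ico (0:ℝ) 1)
    {Ω : Type*} [mΩ : MeasurableSpace Ω] (P : Measure Ω) [IsProbabilityMeasure P]
    (g m v vhat : ℕ → Ω → (Fin n → ℝ))
    (hgmeas : ∀ k, Measurable (g k))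
    (hgbdd : ∀ k, ∃ C : ℝ, ∀ᵐ ω ∂P, ∀ i, |g k ω i| ≤ C)
    (hm0 : ∀ ω i, m 0 ω i = 0) (hv0 : ∀ ω i, v 0 ω i = 0) (hvhat0 : ∀ ω i, vhat 0 ω i = 0)
    (hm : ∀ k ω i, m (k+1) ω i = β₁ * m k ω i + (1 - β₁) * g (k+1) ω i)
    (hv : ∀ k ω i, v (k+1) ω i = β₂ * v k ω i + (1 - β₂) * (g (k+1) ω i)^2)
    (hvhat : ∀ k ω i, vhat (k+1) ω i = max (vhat k ω i) (v (k+1) ω i))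
    (G₁ : ℝ)
    (hG1 : ∀ j, 1 ≤ j → ∫ ω, (∑ i, |g j ω i|) ∂P ≤ G₁)
    (k : ℕ) (hk : 1 ≤ k) :
    ∫ ω, (∑ i, (m k ω i)^2 / Real.sqrt (vhat k ω i)) ∂P ≤ G₁ / Real.sqrt (1 - β₂) := by
  obtain ⟨hb0, hb1⟩ := hβ₁
  obtain ⟨hc0, hc1⟩ := hβ₂
  have hs : 0 < Real.sqrt (1 - β₂) := Real.sqrt_pos.2 (by linarith)
  have hint : ∀ j, Integrable (fun ω => ∑ i, |g j ω i|) P := by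
    intro j
    obtain ⟨C, hC⟩ := hgbdd j
    refine integrable_finsetSum _ fun i _ => ?_
    refine Integrable.of_bound
      (((measurable_pi_iff.1 (hgmeas j) i).norm).aestronglyMeasurable) C ?_
    filter_upwards [hC] with ω h
    simpa using h i
  have hG0 : 0 ≤ G₁ := le_trans
    (integral_nonneg fun ω => Finset.sum_nonneg fun i _ => abs_nonneg _) (hG1 1 le_rfl)
  have hvn : ∀ k ω i, 0 ≤ v k ω i := by
    intro k ω i
    induction k with
    | zero => rw [hv0]
    | succ k ih =>
      rw [hv]
      have : 0 ≤ 1 - β₂ := by linarith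
      positivity
  have hvh : ∀ k ω i, 0 ≤ vhat k ω i := by
    intro k ω i
    induction k with
    | zero => rw [hvhat0]
    | succ k ih => rw [hvhat]; exact le_max_of_le_left ih
  have hge : ∀ k ω i, (1 - β₂) * (g (k+1) ω i)^2 ≤ vhat (k+1) ω i := by
    intro k ω i
    rw [hvhat]
    refine le_max_of_le_right ?_
    rw [hv]
    have := mul_nonneg hc0 (hvn k ω i)
    linarith
  have hmz : ∀ k ω i, vhat k ω i = 0 → m k ω i = 0 := by
    intro k ω i
    induction k with
    | zero => intro _; exact hm0 ω i
    | succ k ih =>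
      intro h
      have h1 := hge k ω i
      have h2 : vhat k ω i ≤ vhat (k+1) ω i := by rw [hvhat]; exact le_max_left _ _
      have h3 : vhat k ω i = 0 := le_antisymm (by linarith) (hvh k ω i)
      have h4 : (g (k+1) ω i)^2 = 0 := by
        refine le_antisymm ?_ (sq_nonneg _)
        by_contra hh
        have := mul_pos (by linarith : 0 < 1 - β₂) (not_le.1 hh)
        linarith
      rw [hm, ih h3, pow_eq_zero_iff (by norm_num) |>.1 h4]
      simp
  have hstep : ∀ k ω i, (m (k+1) ω i)^2 / Real.sqrt (vhat (k+1) ω i) ≤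
      β₁ * ((m k ω i)^2 / Real.sqrt (vhat k ω i)) +
        (1 - β₁) * (|g (k+1) ω i| / Real.sqrt (1 - β₂)) := by
    intro k ω i
    have hb : 0 ≤ 1 - β₁ := by linarith
    rcases (hvh (k+1) ω i).eq_or_lt with h | h
    · rw [← h]
      simp only [Real.sqrt_zero, div_zero]
      positivity
    have hS : 0 < Real.sqrt (vhat (k+1) ω i) := Real.sqrt_pos.2 h
    have hA : (m k ω i)^2 / Real.sqrt (vhat (k+1) ω i) ≤
        (m k ω i)^2 / Real.sqrt (vhat k ω i) := by
      rcases (hvh k ω i).eq_or_lt with h0 | h0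
      · rw [hmz k ω i h0.symm]; simp
      · have := Real.sqrt_pos.2 h0
        have h2 : vhat k ω i ≤ vhat (k+1) ω i := by rw [hvhat]; exact le_max_left _ _
        gcongr
    have hB : (g (k+1) ω i)^2 / Real.sqrt (vhat (k+1) ω i) ≤
        |g (k+1) ω i| / Real.sqrt (1 - β₂) := by
      rw [div_le_div_iff₀ hS hs]
      have h3 := Real.sqrt_le_sqrt (hge k ω i)
      rw [Real.sqrt_mul (by linarith), Real.sqrt_sq_eq_abs] at h3
      have h4 := mul_le_mul_of_nonneg_left h3 (abs_nonneg (g (k+1) ω i))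
      rw [← sq_abs]
      nlinarith
    have hC : (m (k+1) ω i)^2 ≤ β₁ * (m k ω i)^2 + (1 - β₁) * (g (k+1) ω i)^2 := by
      rw [hm]
      nlinarith [mul_nonneg (mul_nonneg hb0 hb) (sq_nonneg (m k ω i - g (k+1) ω i))]
    calc _ ≤ (β₁ * (m k ω i)^2 + (1 - β₁) * (g (k+1) ω i)^2) / Real.sqrt (vhat (k+1) ω i) := by
          gcongr
      _ = β₁ * ((m k ω i)^2 / Real.sqrt (vhat (k+1) ω i)) +
          (1 - β₁) * ((g (k+1) ω i)^2 / Real.sqrt (vhat (k+1) ω i)) := by ring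
      _ ≤ _ := by gcongr
  have key : ∀ k, ∃ A : Ω → ℝ, Integrable A P ∧ ∫ ω, A ω ∂P ≤ G₁ / Real.sqrt (1 - β₂) ∧
      ∀ ω, ∑ i, (m k ω i)^2 / Real.sqrt (vhat k ω i) ≤ A ω := by
    intro k
    induction k with
    | zero =>
      refine ⟨fun _ => 0, integrable_zero _ _ _, ?_, fun ω => ?_⟩
      · simp only [integral_zero]; positivity
      · simp [hm0]
    | succ k ih =>
      obtain ⟨A, hA, hAi, hAl⟩ := ih
      have hI := (hint (k+1)).div_const (Real.sqrt (1 - β₂))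
      refine ⟨fun ω => β₁ * A ω + (1 - β₁) * ((∑ i, |g (k+1) ω i|) / Real.sqrt (1 - β₂)),
        (hA.const_mul _).add (hI.const_mul _), ?_, fun ω => ?_⟩
      · rw [integral_add (hA.const_mul _) (hI.const_mul _), integral_const_mul,
          integral_const_mul, integral_div]
        have h1 := div_le_div_of_nonneg_right (hG1 (k+1) (by omega)) hs.le
        have h2 := mul_le_mul_of_nonneg_left hAi hb0
        have h3 := mul_le_mul_of_nonneg_left h1 (by linarith : 0 ≤ 1 - β₁)
        linarith
      · refine (Finset.sum_le_sum fun i _ => hstep k ω i).trans ?_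
        rw [Finset.sum_add_distrib, ← Finset.mul_sum, ← Finset.mul_sum, ← Finset.sum_div]
        have := mul_le_mul_of_nonneg_left (hAl ω) hb0
        linarith
  obtain ⟨A, hA, hAi, hAl⟩ := key k
  refine le_trans (integral_mono_of_nonneg (Filter.Eventually.of_forall fun ω => ?_) hA
    (Filter.Eventually.of_forall hAl)) hAi
  exact Finset.sum_nonneg fun i _ => div_nonneg (sq_nonneg _) (Real.sqrt_nonneg _)
end

section
/- For every k ≥ 1, ∑_{i=1}^{n} (m_i^(k))² / √(v̂_i^(k)) ≤ ((1−β₁)/√(1−β₂)) · ∑_{j=1}^{k} β₁^{k−j} ‖g^(j)‖₁, where terms with v̂_i^(k) = 0 are interpreted as 0 and β₂ < 1. -/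
open Finset

/-- For every `k ≥ 1`,
`∑_i (m_i^(k))²/√(v̂_i^(k)) ≤ ((1−β₁)/√(1−β₂)) ∑_{j=1}^{k} β₁^{k−j} ‖g^(j)‖₁`
(terms with `v̂_i^(k) = 0` are interpreted as `0`, which matches Lean's `x / 0 = 0`). -/
theorem stmt9
    {n : ℕ} (hn : 1 ≤ n)
    (β₁ β₂ : ℝ) (hβ₁ : β₁ ∈ Set.Ico (0:ℝ) 1) (hβ₂ : β₂ ∈ Set.Ico (0:ℝ) 1)
    (g m v vhat : ℕ → Fin n → ℝ)
    (hm0 : ∀ i, m 0 i = 0) (hv0 : ∀ i, v 0 i = 0) (hvhat0 : ∀ i, vhat 0 i = 0)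
    (hm : ∀ k i, m (k+1) i = β₁ * m k i + (1 - β₁) * g (k+1) i)
    (hv : ∀ k i, v (k+1) i = β₂ * v k i + (1 - β₂) * (g (k+1) i)^2)
    (hvhat : ∀ k i, vhat (k+1) i = max (vhat k i) (v (k+1) i))
    (k : ℕ) (hk : 1 ≤ k) :
    (∑ i, (m k i)^2 / Real.sqrt (vhat k i))
      ≤ ((1 - β₁) / Real.sqrt (1 - β₂)) *
          ∑ j ∈ Finset.Icc 1 k, β₁ ^ (k - j) * (∑ i, |g j i|) := by
  obtain ⟨hb0, hb1⟩ := hβ₁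
  obtain ⟨hc0, hc1⟩ := hβ₂
  have hs : 0 < Real.sqrt (1 - β₂) := Real.sqrt_pos.mpr (by linarith)
  have hvn : ∀ k i, 0 ≤ v k i := by
    intro k i
    induction k with
    | zero => rw [hv0]
    | succ k ih =>
      rw [hv]
      have h1 : 0 ≤ 1 - β₂ := by linarith
      positivity
  have habs : ∀ k i, |m (k+1) i| ≤ β₁ * |m k i| + (1 - β₁) * |g (k+1) i| := by
    intro k i
    rw [hm]
    refine (abs_add_le _ _).trans ?_
    rw [abs_mul, abs_mul, abs_of_nonneg hb0, abs_of_nonneg (by linarith : 0 ≤ 1 - β₁)]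
  have hA : ∀ k i, Real.sqrt (1 - β₂) * |m k i| ≤ Real.sqrt (vhat k i) := by
    intro k i
    induction k with
    | zero => simp [hm0, hvhat0]
    | succ k ih =>
      have h1 : Real.sqrt (vhat k i) ≤ Real.sqrt (vhat (k+1) i) :=
        Real.sqrt_le_sqrt (by rw [hvhat]; exact le_max_left _ _)
      have h2 : Real.sqrt (1 - β₂) * |g (k+1) i| ≤ Real.sqrt (vhat (k+1) i) := by
        rw [← Real.sqrt_sq_eq_abs, ← Real.sqrt_mul (by linarith)]
        apply Real.sqrt_le_sqrt
        rw [hvhat]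
        refine le_trans ?_ (le_max_right _ _)
        rw [hv]
        have := mul_nonneg hc0 (hvn k i)
        linarith
      have h3 := mul_le_mul_of_nonneg_left (habs k i) hs.le
      have h4 := mul_le_mul_of_nonneg_left (ih.trans h1) hb0
      have h5 := mul_le_mul_of_nonneg_left h2 (by linarith : 0 ≤ 1 - β₁)
      linarith
  have hB : ∀ k i, |m k i| ≤ (1 - β₁) * ∑ j ∈ Finset.Icc 1 k, β₁ ^ (k - j) * |g j i| := by
    intro k i
    induction k with
    | zero => simp [hm0]
    | succ k ih =>
      have h1 : ∑ j ∈ Finset.Icc 1 (k+1), β₁ ^ (k + 1 - j) * |g j i|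
          = β₁ * ∑ j ∈ Finset.Icc 1 k, β₁ ^ (k - j) * |g j i| + |g (k+1) i| := by
        rw [Finset.sum_Icc_succ_top (by omega), Finset.mul_sum]
        congr 1
        · apply Finset.sum_congr rfl
          intro j hj
          rw [Finset.mem_Icc] at hj
          rw [show k + 1 - j = (k - j) + 1 by omega, pow_succ]
          ring
        · simp
      rw [h1]
      have h3 := mul_le_mul_of_nonneg_left ih hb0
      have h4 := habs k i
      linarith
  have hC : ∀ i, (m k i)^2 / Real.sqrt (vhat k i) ≤ |m k i| / Real.sqrt (1 - β₂) := by
    intro i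
    rcases (Real.sqrt_nonneg (vhat k i)).eq_or_lt with h | h
    · rw [← h]
      simp only [div_zero]
      positivity
    · rw [div_le_div_iff₀ h hs, ← sq_abs]
      have := mul_le_mul_of_nonneg_left (hA k i) (abs_nonneg (m k i))
      linarith
  calc (∑ i, (m k i)^2 / Real.sqrt (vhat k i))
      ≤ ∑ i, ((1 - β₁) * ∑ j ∈ Finset.Icc 1 k, β₁ ^ (k - j) * |g j i|) / Real.sqrt (1 - β₂) :=
        Finset.sum_le_sum fun i _ => (hC i).trans (div_le_div_of_nonneg_right (hB k i) hs.le)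
    _ = _ := by
        rw [← Finset.sum_div, ← Finset.mul_sum, Finset.sum_comm]
        simp only [Finset.mul_sum]
        rw [Finset.sum_div]
        refine Finset.sum_congr rfl fun j _ => ?_
        rw [Finset.sum_div]
        refine Finset.sum_congr rfl fun i _ => ?_
        ring
end

section
/- Assume β₂ < 1. Then for every k ≥ 1: (a) for every j ≤ k, ‖g^(j) ⊘ √v̂^(k)‖ ≤ √(‖g^(j)‖₀) / √(1−β₂); (b) ‖m^(k) ⊘ √v̂^(k)‖ ≤ ∑_{j=1}^{k} (1−β₁) β₁^{k−j} √(‖g^(j)‖₀) / √(1−β₂); and (c) ‖m^(k) ⊘ √v̂^(k)‖² ≤ ((1−β₁)/(1−β₂)) · ∑_{j=1}^{k} β₁^{k−j} ‖g^(j)‖₀. -/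
open Finset

lemma aux_rec (β : ℝ) (hβ : 0 ≤ β) (A c : ℕ → ℝ) (h0 : A 0 ≤ 0) (k : ℕ)
    (h : ∀ t, t < k → A (t+1) ≤ β * A t + c (t+1)) :
    A k ≤ ∑ j ∈ Finset.Icc 1 k, β ^ (k - j) * c j := by
  induction k with
  | zero => simpa using h0
  | succ k ih =>
    have h1 := ih (fun t ht => h t (by omega))
    have h2 := h k (by omega)
    rw [Finset.sum_Icc_succ_top (by omega)]
    have h3 : ∑ j ∈ Finset.Icc 1 k, β ^ (k + 1 - j) * c j
        = β * ∑ j ∈ Finset.Icc 1 k, β ^ (k - j) * c j := by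
      rw [Finset.mul_sum]
      refine Finset.sum_congr rfl fun j hj => ?_
      have := (Finset.mem_Icc.mp hj).2
      rw [show k + 1 - j = (k - j) + 1 by omega, pow_succ]; ring
    rw [h3]
    have := mul_le_mul_of_nonneg_left h1 hβ
    simp only [Nat.sub_self, pow_zero, one_mul]
    linarith

lemma aux_tri {n : ℕ} (a b : ℝ) (ha : 0 ≤ a) (hb : 0 ≤ b) (x y : Fin n → ℝ) :
    Real.sqrt (∑ i, (a * x i + b * y i)^2)
      ≤ a * Real.sqrt (∑ i, (x i)^2) + b * Real.sqrt (∑ i, (y i)^2) := by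
  have h := norm_add_le (a • (WithLp.toLp 2 x : EuclideanSpace ℝ (Fin n)))
    (b • (WithLp.toLp 2 y : EuclideanSpace ℝ (Fin n)))
  rw [norm_smul, norm_smul] at h
  simpa [EuclideanSpace.norm_eq, abs_of_nonneg ha, abs_of_nonneg hb] using h


/-- For every `k ≥ 1`:
(a) for every `j ≤ k`, `‖g^(j) ⊘ √v̂^(k)‖ ≤ √(‖g^(j)‖₀)/√(1−β₂)`;
(b) `‖m^(k) ⊘ √v̂^(k)‖ ≤ ∑_{j=1}^k (1−β₁) β₁^{k−j} √(‖g^(j)‖₀)/√(1−β₂)`;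
(c) `‖m^(k) ⊘ √v̂^(k)‖² ≤ ((1−β₁)/(1−β₂)) ∑_{j=1}^k β₁^{k−j} ‖g^(j)‖₀`.
Componentwise division by `0` is `0` (Lean's convention), `‖u‖₀` is the number of nonzero
components, and the Euclidean norms are written via `√(∑ …²)`. -/
theorem stmt11
    {n : ℕ} (hn : 1 ≤ n)
    (β₁ β₂ : ℝ) (hβ₁ : β₁ ∈ Set.Ico (0:ℝ) 1) (hβ₂ : β₂ ∈ Set.Ico (0:ℝ) 1)
    (g m v vhat : ℕ → Fin n → ℝ)
    (hm0 : ∀ i, m 0 i = 0) (hv0 : ∀ i, v 0 i = 0) (hvhat0 : ∀ i, vhat 0 i = 0)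
    (hm : ∀ k i, m (k+1) i = β₁ * m k i + (1 - β₁) * g (k+1) i)
    (hv : ∀ k i, v (k+1) i = β₂ * v k i + (1 - β₂) * (g (k+1) i)^2)
    (hvhat : ∀ k i, vhat (k+1) i = max (vhat k i) (v (k+1) i))
    (k : ℕ) (hk : 1 ≤ k) :
    (∀ j, 1 ≤ j → j ≤ k →
        Real.sqrt (∑ i, (g j i / Real.sqrt (vhat k i))^2)
          ≤ Real.sqrt ((Finset.univ.filter (fun i => g j i ≠ 0)).card) / Real.sqrt (1 - β₂))
    ∧ Real.sqrt (∑ i, (m k i / Real.sqrt (vhat k i))^2)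
        ≤ ∑ j ∈ Finset.Icc 1 k, (1 - β₁) * β₁ ^ (k - j) *
            (Real.sqrt ((Finset.univ.filter (fun i => g j i ≠ 0)).card) / Real.sqrt (1 - β₂))
    ∧ (∑ i, (m k i / Real.sqrt (vhat k i))^2)
        ≤ ((1 - β₁) / (1 - β₂)) *
            ∑ j ∈ Finset.Icc 1 k, β₁ ^ (k - j) *
              ((Finset.univ.filter (fun i => g j i ≠ 0)).card : ℝ) := by
  obtain ⟨hb0, hb1⟩ := hβ₁
  obtain ⟨hc0, hc1⟩ := hβ₂
  have hc : 0 < 1 - β₂ := by linarith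
  have hvnn : ∀ t i, 0 ≤ v t i := by
    intro t i
    induction t with
    | zero => rw [hv0]
    | succ t ih => rw [hv]; positivity
  have hmono : ∀ i, Monotone (fun t => vhat t i) := fun i =>
    monotone_nat_of_le_succ (fun t => by rw [hvhat]; exact le_max_left _ _)
  have hge : ∀ j i, 1 ≤ j → j ≤ k → (1 - β₂) * (g j i)^2 ≤ vhat k i := by
    intro j i h1 h2
    refine le_trans ?_ (hmono i h2)
    obtain ⟨t, rfl⟩ : ∃ t, j = t + 1 := ⟨j - 1, by omega⟩
    simp only [hvhat, hv]
    refine le_trans ?_ (le_max_right _ _)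
    have := mul_nonneg hc0 (hvnn t i)
    linarith
  have hG : ∀ j, 1 ≤ j → j ≤ k → ∑ i, (g j i / Real.sqrt (vhat k i))^2
      ≤ ((Finset.univ.filter (fun i => g j i ≠ 0)).card : ℝ) / (1 - β₂) := by
    intro j h1 h2
    rw [Finset.card_filter, Nat.cast_sum, Finset.sum_div]
    refine Finset.sum_le_sum fun i _ => ?_
    by_cases h : g j i = 0
    · simp [h]
    · have hp : 0 < (g j i)^2 := by positivity
      have hq := hge j i h1 h2
      have hv' : 0 < vhat k i := lt_of_lt_of_le (mul_pos hc hp) hq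
      rw [div_pow, Real.sq_sqrt hv'.le]
      simp only [h, ne_eq, not_false_eq_true, if_true, Nat.cast_one]
      rw [div_le_div_iff₀ hv' hc]
      linarith
  have hA : ∀ j, 1 ≤ j → j ≤ k →
        Real.sqrt (∑ i, (g j i / Real.sqrt (vhat k i))^2)
          ≤ Real.sqrt ((Finset.univ.filter (fun i => g j i ≠ 0)).card) / Real.sqrt (1 - β₂) := by
    intro j h1 h2
    rw [← Real.sqrt_div (Nat.cast_nonneg _)]
    exact Real.sqrt_le_sqrt (hG j h1 h2)
  have hstep : ∀ t i, m (t+1) i / Real.sqrt (vhat k i)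
      = β₁ * (m t i / Real.sqrt (vhat k i)) + (1 - β₁) * (g (t+1) i / Real.sqrt (vhat k i)) := by
    intro t i; rw [hm]; ring
  have hb : 0 ≤ 1 - β₁ := by linarith
  refine ⟨hA, ?_, ?_⟩
  · have := aux_rec β₁ hb0 (fun t => Real.sqrt (∑ i, (m t i / Real.sqrt (vhat k i))^2))
      (fun j => (1 - β₁) * (Real.sqrt ((Finset.univ.filter (fun i => g j i ≠ 0)).card)
        / Real.sqrt (1 - β₂))) (by simp [hm0]) k ?_
    · refine this.trans (le_of_eq (Finset.sum_congr rfl fun j _ => by ring))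
    · intro t ht
      simp only [hstep]
      refine (aux_tri _ _ hb0 hb _ _).trans ?_
      have := mul_le_mul_of_nonneg_left (hA (t+1) (by omega) (by omega)) hb
      linarith
  · have := aux_rec β₁ hb0 (fun t => ∑ i, (m t i / Real.sqrt (vhat k i))^2)
      (fun j => (1 - β₁) * (((Finset.univ.filter (fun i => g j i ≠ 0)).card : ℝ)
        / (1 - β₂))) (by simp [hm0]) k ?_
    · refine this.trans (le_of_eq ?_)
      rw [Finset.mul_sum]
      exact Finset.sum_congr rfl fun j _ => by ring
    · intro t ht
      have h1 := mul_le_mul_of_nonneg_left (hG (t+1) (by omega) (by omega)) hb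
      have h2 : ∑ i, (m (t+1) i / Real.sqrt (vhat k i))^2
          ≤ β₁ * ∑ i, (m t i / Real.sqrt (vhat k i))^2
            + (1 - β₁) * ∑ i, (g (t+1) i / Real.sqrt (vhat k i))^2 := by
        rw [Finset.mul_sum, Finset.mul_sum, ← Finset.sum_add_distrib]
        refine Finset.sum_le_sum fun i _ => ?_
        rw [hstep]
        have := mul_nonneg (mul_nonneg hb0 hb)
          (sq_nonneg (m t i / Real.sqrt (vhat k i) - g (t+1) i / Real.sqrt (vhat k i)))
        nlinarith [this]
      exact h2.trans (by linarith)
end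

section
/- Assume additionally that (α_k) is nonincreasing, that ṽ^(k−1) ≤ ṽ^(k) componentwise for all 2 ≤ k ≤ K, and that F : ℝ^n → ℝ is differentiable. Define Γ_i = max_{1 ≤ k ≤ K} |g_i^(k)| and Φ_i = max_{1 ≤ k ≤ K} |∂F/∂x_i (x^(k))|. Then for every 2 ≤ k ≤ K: ⟨∇F(x^(k)), z^(k+1) − z^(k)⟩ ≤ −α_{k−1} · ∑_{i=1}^{n} (∂F/∂x_i(x^(k))) · g_i^(k) / √(ṽ_i^(k−1)) + (1/(1−β₁)) · ∑_{i=1}^{n} Γ_i Φ_i · ( α_{k−1}/√(ṽ_i^(k−1)) − α_k/√(ṽ_i^(k)) ). -/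
open Finset

/-- with nonincreasing step sizes, componentwise nondecreasing `ṽ`, and `F`
differentiable with gradient `∇F`, setting `Γ_i = max_{1≤k≤K}|g_i^(k)|` and
`Φ_i = max_{1≤k≤K}|∂_i F(x^(k))|`, for every `2 ≤ k ≤ K`:
`⟨∇F(x^(k)), z^(k+1)−z^(k)⟩ ≤ −α_{k−1} ∑_i ∂_iF(x^(k)) g_i^(k)/√(ṽ_i^(k−1))
 + (1/(1−β₁)) ∑_i Γ_i Φ_i (α_{k−1}/√(ṽ_i^(k−1)) − α_k/√(ṽ_i^(k)))`. -/
theorem stmt14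
    {n : ℕ} (hn : 1 ≤ n) (K : ℕ) (hK : 2 ≤ K)
    (β₁ β₂ : ℝ) (hβ₁ : β₁ ∈ Set.Ico (0:ℝ) 1) (hβ₂ : β₂ ∈ Set.Ico (0:ℝ) 1)
    (g m : ℕ → Fin n → ℝ)
    (hm0 : ∀ i, m 0 i = 0)
    (hm : ∀ k i, m (k+1) i = β₁ * m k i + (1 - β₁) * g (k+1) i)
    (vtilde : ℕ → Fin n → ℝ)
    (hvpos : ∀ k, 1 ≤ k → k ≤ K → ∀ i, 0 < vtilde k i)
    (hvmono : ∀ k, 2 ≤ k → k ≤ K → ∀ i, vtilde (k-1) i ≤ vtilde k i)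
    (αseq : ℕ → ℝ) (hαpos : ∀ k, 0 < αseq k) (hαmono : ∀ k, αseq (k+1) ≤ αseq k)
    (x z : ℕ → EuclideanSpace ℝ (Fin n))
    (hx0 : ∀ i, x 0 i = x 1 i)
    (hx : ∀ k, 1 ≤ k → k ≤ K → ∀ i,
      x (k+1) i = x k i - αseq k * (m k i / Real.sqrt (vtilde k i)))
    (hz : ∀ k, 1 ≤ k → ∀ i,
      z k i = x k i + (β₁ / (1 - β₁)) * (x k i - x (k-1) i))
    (F : EuclideanSpace ℝ (Fin n) → ℝ)
    (gradF : EuclideanSpace ℝ (Fin n) → EuclideanSpace ℝ (Fin n))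
    (hF : ∀ p, HasGradientAt F (gradF p) p)
    (Γ Φ : Fin n → ℝ)
    (hΓ : ∀ i, Γ i = (Finset.Icc 1 K).sup'
      (Finset.nonempty_Icc.mpr (le_trans one_le_two hK)) (fun k => |g k i|))
    (hΦ : ∀ i, Φ i = (Finset.Icc 1 K).sup'
      (Finset.nonempty_Icc.mpr (le_trans one_le_two hK)) (fun k => |gradF (x k) i|))
    (k : ℕ) (hk2 : 2 ≤ k) (hkK : k ≤ K) :
    (∑ i, gradF (x k) i * (z (k+1) i - z k i))
      ≤ -(αseq (k-1)) * (∑ i, gradF (x k) i * g k i / Real.sqrt (vtilde (k-1) i))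
        + (1 / (1 - β₁)) * ∑ i, Γ i * Φ i *
            (αseq (k-1) / Real.sqrt (vtilde (k-1) i) - αseq k / Real.sqrt (vtilde k i)) := by
  obtain ⟨hb0, hb1⟩ := hβ₁
  have hb : 0 < 1 - β₁ := by linarith
  have hg : ∀ i, ∀ j, 1 ≤ j → j ≤ K → |g j i| ≤ Γ i := by
    intro i j h1 h2
    rw [hΓ i]
    exact Finset.le_sup' (fun k => |g k i|) (Finset.mem_Icc.mpr ⟨h1, h2⟩)
  have hf : ∀ i, |gradF (x k) i| ≤ Φ i := by
    intro i
    rw [hΦ i]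
    exact Finset.le_sup' (fun k => |gradF (x k) i|) (Finset.mem_Icc.mpr ⟨by omega, hkK⟩)
  have hΓ0 : ∀ i, 0 ≤ Γ i := fun i => (abs_nonneg _).trans (hg i k (by omega) hkK)
  have hmb : ∀ i, ∀ j, j ≤ K → |m j i| ≤ Γ i := by
    intro i j
    induction j with
    | zero => intro _; rw [hm0]; simpa using hΓ0 i
    | succ j ih =>
      intro h
      have h1 := abs_le.mp (ih (by omega))
      have h2 := abs_le.mp (hg i (j+1) (by omega) h)
      rw [hm, abs_le]
      constructor <;> nlinarith [h1.1, h1.2, h2.1, h2.2]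
  obtain ⟨j, rfl⟩ : ∃ j, k = j + 1 := ⟨k - 1, by omega⟩
  have hj : j + 1 - 1 = j := rfl
  simp only [hj]
  rw [Finset.mul_sum, Finset.mul_sum, ← Finset.sum_add_distrib]
  refine Finset.sum_le_sum fun i _ => ?_
  have e1 := hz (j+1+1) (by omega) i
  have e2 := hz (j+1) (by omega) i
  have e3 := hx (j+1) (by omega) hkK i
  have e4 := hx j (by omega) (by omega) i
  have e5 := hm j i
  have hv := hvmono (j+1) hk2 hkK i
  have hp := Real.sqrt_pos.mpr (hvpos j (by omega) (by omega) i)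
  simp only [Nat.add_sub_cancel] at e1 e2 hv
  have hD : αseq (j+1) / Real.sqrt (vtilde (j+1) i) ≤ αseq j / Real.sqrt (vtilde j i) :=
    div_le_div₀ (hαpos j).le (hαmono j) hp (Real.sqrt_le_sqrt hv)
  have key : z (j+1+1) i - z (j+1) i =
      (1 / (1 - β₁)) * ((αseq j / Real.sqrt (vtilde j i)
        - αseq (j+1) / Real.sqrt (vtilde (j+1) i)) * m (j+1) i)
      - αseq j / Real.sqrt (vtilde j i) * g (j+1) i := by
    have hne := hb.ne'
    rw [e1, e2, e3, e4, e5]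
    simp only [div_eq_mul_inv]
    generalize (Real.sqrt (vtilde j i))⁻¹ = a
    generalize (Real.sqrt (vtilde (j+1) i))⁻¹ = b
    field_simp
    ring
  have hprod : gradF (x (j+1)) i * m (j+1) i ≤ Γ i * Φ i := by
    calc _ ≤ |gradF (x (j+1)) i * m (j+1) i| := le_abs_self _
      _ = |m (j+1) i| * |gradF (x (j+1)) i| := by rw [abs_mul, mul_comm]
      _ ≤ _ := mul_le_mul (hmb i _ hkK) (hf i) (abs_nonneg _) (hΓ0 i)
  have h1 := mul_le_mul_of_nonneg_left
    (mul_le_mul_of_nonneg_right hprod (sub_nonneg.mpr hD)) (one_div_pos.mpr hb).le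
  rw [key]
  refine le_trans (le_of_eq ?_) (add_le_add_right h1 _)
  ring
end

section
/- Assume additionally that (α_k) is nonincreasing, that ṽ^(k−1) ≤ ṽ^(k) componentwise for all 2 ≤ k ≤ K, and that F : ℝ^n → ℝ is differentiable and L-smooth (‖∇F(x) − ∇F(y)‖ ≤ L‖x − y‖ for all x, y). Then for every 1 ≤ k ≤ K: (a) ⟨∇F(z^(k)) − ∇F(x^(k)), z^(k+1) − z^(k)⟩ ≤ (3Lβ₁²/(2(1−β₁)²))·‖x^(k−1) − x^(k)‖² + (L/2)·α_k²·‖g^(k) ⊘ √ṽ^(k)‖²; and (b) ‖z^(k+1) − z^(k)‖² ≤ (4β₁²/(1−β₁)²)·‖x^(k−1) − x^(k)‖² + (4/3)·α_k²·‖g^(k) ⊘ √ṽ^(k)‖², where ‖·‖ is the Euclidean norm. -/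
open Finset

/-- with nonincreasing step sizes, componentwise nondecreasing `ṽ`, and `F`
differentiable and `L`-smooth, for every `1 ≤ k ≤ K`:
(a) `⟨∇F(z^(k))−∇F(x^(k)), z^(k+1)−z^(k)⟩ ≤ (3Lβ₁²/(2(1−β₁)²))‖x^(k−1)−x^(k)‖²
     + (L/2) α_k² ‖g^(k) ⊘ √ṽ^(k)‖²`;
(b) `‖z^(k+1)−z^(k)‖² ≤ (4β₁²/(1−β₁)²)‖x^(k−1)−x^(k)‖² + (4/3) α_k² ‖g^(k) ⊘ √ṽ^(k)‖²`. -/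
theorem stmt15
    {n : ℕ} (hn : 1 ≤ n) (K : ℕ) (hK : 2 ≤ K)
    (β₁ β₂ : ℝ) (hβ₁ : β₁ ∈ Set.Ico (0:ℝ) 1) (hβ₂ : β₂ ∈ Set.Ico (0:ℝ) 1)
    (g m : ℕ → Fin n → ℝ)
    (hm0 : ∀ i, m 0 i = 0)
    (hm : ∀ k i, m (k+1) i = β₁ * m k i + (1 - β₁) * g (k+1) i)
    (vtilde : ℕ → Fin n → ℝ)
    (hvpos : ∀ k, 1 ≤ k → k ≤ K → ∀ i, 0 < vtilde k i)
    (hvmono : ∀ k, 2 ≤ k → k ≤ K → ∀ i, vtilde (k-1) i ≤ vtilde k i)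
    (αseq : ℕ → ℝ) (hαpos : ∀ k, 0 < αseq k) (hαmono : ∀ k, αseq (k+1) ≤ αseq k)
    (x z : ℕ → EuclideanSpace ℝ (Fin n))
    (hx0 : ∀ i, x 0 i = x 1 i)
    (hx : ∀ k, 1 ≤ k → k ≤ K → ∀ i,
      x (k+1) i = x k i - αseq k * (m k i / Real.sqrt (vtilde k i)))
    (hz : ∀ k, 1 ≤ k → ∀ i,
      z k i = x k i + (β₁ / (1 - β₁)) * (x k i - x (k-1) i))
    (F : EuclideanSpace ℝ (Fin n) → ℝ)
    (gradF : EuclideanSpace ℝ (Fin n) → EuclideanSpace ℝ (Fin n))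
    (hF : ∀ p, HasGradientAt F (gradF p) p)
    (L : ℝ) (hL : ∀ p q, ‖gradF p - gradF q‖ ≤ L * ‖p - q‖)
    (k : ℕ) (hk1 : 1 ≤ k) (hkK : k ≤ K) :
    ((∑ i, (gradF (z k) i - gradF (x k) i) * (z (k+1) i - z k i))
      ≤ (3 * L * β₁^2 / (2 * (1 - β₁)^2)) * ‖x (k-1) - x k‖^2
        + (L / 2) * (αseq k)^2 * (∑ i, (g k i / Real.sqrt (vtilde k i))^2))
    ∧ (‖z (k+1) - z k‖^2
        ≤ (4 * β₁^2 / (1 - β₁)^2) * ‖x (k-1) - x k‖^2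
          + (4 / 3) * (αseq k)^2 * (∑ i, (g k i / Real.sqrt (vtilde k i))^2)) := by
  obtain ⟨hb0, hb1⟩ := hβ₁
  have h1b : 0 < 1 - β₁ := by linarith
  have hL0 : 0 ≤ L := by
    have h := hL (EuclideanSpace.single ⟨0, hn⟩ (1:ℝ)) 0
    rw [sub_zero (EuclideanSpace.single _ _)] at h
    have h2 : ‖(EuclideanSpace.single (⟨0, hn⟩ : Fin n) (1:ℝ))‖ = 1 := by simp
    rw [h2, mul_one] at h
    exact (norm_nonneg _).trans h
  have key : ∃ c : Fin n → ℝ, ∀ i, 0 ≤ c i ∧ c i ≤ 1 ∧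
      z (k+1) i - z k i = (β₁ / (1 - β₁)) * ((1 - c i) * (x (k-1) i - x k i))
        - αseq k * (g k i / Real.sqrt (vtilde k i)) := by
    obtain ⟨j, rfl⟩ : ∃ j, k = j + 1 := ⟨k - 1, by omega⟩
    rcases Nat.eq_zero_or_pos j with rfl | hj
    · refine ⟨fun _ => 0, fun i => ⟨le_rfl, zero_le_one, ?_⟩⟩
      have e1 := hz 1 le_rfl i
      have e2 := hz 2 (by omega) i
      have e3 := hx 1 le_rfl hkK i
      have e4 := hm 0 i
      have e5 := hx0 i
      have e6 := hm0 i
      simp only [Nat.reduceAdd, Nat.reduceSub, zero_add] at *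
      rw [e1, e2, e3, e4, e6, e5]
      field_simp
      ring
    · refine ⟨fun i => (αseq (j+1) / αseq j) *
        (Real.sqrt (vtilde j i) / Real.sqrt (vtilde (j+1) i)), fun i => ?_⟩
      have a1 := hαpos j
      have a2 := hαpos (j+1)
      have s1 := Real.sqrt_pos.2 (hvpos j hj (by omega) i)
      have s2 := Real.sqrt_pos.2 (hvpos (j+1) hk1 hkK i)
      have s3 : Real.sqrt (vtilde j i) ≤ Real.sqrt (vtilde (j+1) i) :=
        Real.sqrt_le_sqrt (hvmono (j+1) (by omega) hkK i)
      refine ⟨by positivity, ?_, ?_⟩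
      · exact mul_le_one₀ ((div_le_one a1).2 (hαmono j)) (by positivity) ((div_le_one s2).2 s3)
      · have e1 := hz (j+1) hk1 i
        have e2 := hz (j+1+1) (by omega) i
        have e3 := hx (j+1) hk1 hkK i
        have e4 := hm j i
        have e5 := hx j hj (by omega) i
        simp only [Nat.add_sub_cancel] at *
        rw [e1, e2, e3, e4, e5]
        field_simp
        ring
  obtain ⟨c, hc⟩ := key
  have hn2 : ∀ v : EuclideanSpace ℝ (Fin n), ‖v‖^2 = ∑ i, (v i)^2 := fun v => by
    rw [EuclideanSpace.norm_sq_eq]; simp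
  set b := β₁ / (1 - β₁) with hb
  have hbn : 0 ≤ b := by positivity
  set y : EuclideanSpace ℝ (Fin n) := WithLp.toLp 2 (fun i => (1 - c i) * (x (k-1) i - x k i)) with hy
  set G : EuclideanSpace ℝ (Fin n) := WithLp.toLp 2 (fun i => g k i / Real.sqrt (vtilde k i)) with hG
  have hGs : ∑ i, (g k i / Real.sqrt (vtilde k i))^2 = ‖G‖^2 := by rw [hn2]
  have hw : z (k+1) - z k = b • y - αseq k • G := by
    ext i
    simpa [hy, hG] using (hc i).2.2
  have hu : z k - x k = b • (x k - x (k-1)) := by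
    ext i
    simp [hz k hk1 i, hb]
  have hyd : ‖y‖ ≤ ‖x (k-1) - x k‖ := by
    refine (sq_le_sq₀ (norm_nonneg _) (norm_nonneg _)).1 ?_
    rw [hn2, hn2]
    refine Finset.sum_le_sum fun i _ => ?_
    obtain ⟨h0, h1, _⟩ := hc i
    simp only [hy, PiLp.sub_apply, mul_pow]
    exact mul_le_of_le_one_left (sq_nonneg _) (by nlinarith)
  have ha := hαpos k
  have hwn : ‖z (k+1) - z k‖ ≤ b * ‖x (k-1) - x k‖ + αseq k * ‖G‖ := by
    rw [hw]
    refine (norm_sub_le _ _).trans ?_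
    rw [norm_smul, norm_smul, Real.norm_of_nonneg hbn, Real.norm_of_nonneg ha.le]
    gcongr
  have hun : ‖gradF (z k) - gradF (x k)‖ ≤ L * (b * ‖x (k-1) - x k‖) := by
    have h := hL (z k) (x k)
    rwa [hu, norm_smul, Real.norm_of_nonneg hbn, norm_sub_rev (x k)] at h
  have hin : (∑ i, (gradF (z k) i - gradF (x k) i) * (z (k+1) i - z k i))
      = inner ℝ (gradF (z k) - gradF (x k)) (z (k+1) - z k) := by
    rw [PiLp.inner_apply]
    refine Finset.sum_congr rfl fun i _ => ?_
    simp [mul_comm]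
  rw [hin, hGs]
  have c1 : 3 * L * β₁^2 / (2 * (1 - β₁)^2) = 3 / 2 * L * b^2 := by rw [hb]; field_simp
  have c2 : 4 * β₁^2 / (1 - β₁)^2 = 4 * b^2 := by rw [hb]; field_simp
  rw [c1, c2]
  have hD := norm_nonneg (x (k-1) - x k)
  have hGn := norm_nonneg G
  generalize ‖x (k-1) - x k‖ = D at *
  generalize ‖G‖ = γ at *
  constructor
  · calc _ ≤ ‖gradF (z k) - gradF (x k)‖ * ‖z (k+1) - z k‖ := real_inner_le_norm _ _
      _ ≤ (L * (b * D)) * (b * D + αseq k * γ) := by gcongr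
      _ ≤ _ := by nlinarith [mul_nonneg hL0 (sq_nonneg (b * D - αseq k * γ))]
  · calc _ ≤ (b * D + αseq k * γ)^2 := by gcongr
      _ ≤ _ := by nlinarith [sq_nonneg (3 * (b * D) - αseq k * γ)]
end

section
/- Assume additionally that (α_k) is nonincreasing and that ṽ^(k−1) ≤ ṽ^(k) componentwise for all 2 ≤ k ≤ K. Then for every 1 ≤ k ≤ K: ‖z^(k+1) − z^(k)‖ ≤ (β₁/(1−β₁))·‖x^(k−1) − x^(k)‖ + α_k·‖g^(k) ⊘ √ṽ^(k)‖, where ‖·‖ is the Euclidean norm. -/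
open Finset

theorem aux_minkowski {n : ℕ} (b a : ℝ) (hb : 0 ≤ b) (ha : 0 ≤ a) (w d y : Fin n → ℝ)
    (h : ∀ i, |w i| ≤ b * |d i| + a * |y i|) :
    Real.sqrt (∑ i, (w i)^2) ≤ b * Real.sqrt (∑ i, (d i)^2) + a * Real.sqrt (∑ i, (y i)^2) := by
  have key := norm_add_le (b • (WithLp.toLp 2 (fun i => |d i|) : EuclideanSpace ℝ (Fin n)))
    (a • (WithLp.toLp 2 (fun i => |y i|) : EuclideanSpace ℝ (Fin n)))
  rw [norm_smul, norm_smul, Real.norm_of_nonneg hb, Real.norm_of_nonneg ha] at key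
  simp only [EuclideanSpace.norm_eq, Real.norm_eq_abs, sq_abs, PiLp.add_apply, PiLp.smul_apply,
    smul_eq_mul] at key
  refine le_trans (Real.sqrt_le_sqrt (Finset.sum_le_sum fun i _ => ?_)) key
  rw [← sq_abs (w i)]
  exact pow_le_pow_left₀ (abs_nonneg _) (h i) 2

/-- with nonincreasing step sizes and componentwise nondecreasing `ṽ`,
for every `1 ≤ k ≤ K`,
`‖z^(k+1) − z^(k)‖ ≤ (β₁/(1−β₁))‖x^(k−1) − x^(k)‖ + α_k ‖g^(k) ⊘ √ṽ^(k)‖`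
(Euclidean norms written out explicitly). -/
theorem stmt18
    {n : ℕ} (hn : 1 ≤ n) (K : ℕ) (hK : 2 ≤ K)
    (β₁ β₂ : ℝ) (hβ₁ : β₁ ∈ Set.Ico (0:ℝ) 1) (hβ₂ : β₂ ∈ Set.Ico (0:ℝ) 1)
    (g m : ℕ → Fin n → ℝ)
    (hm0 : ∀ i, m 0 i = 0)
    (hm : ∀ k i, m (k+1) i = β₁ * m k i + (1 - β₁) * g (k+1) i)
    (vtilde : ℕ → Fin n → ℝ)
    (hvpos : ∀ k, 1 ≤ k → k ≤ K → ∀ i, 0 < vtilde k i)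
    (hvmono : ∀ k, 2 ≤ k → k ≤ K → ∀ i, vtilde (k-1) i ≤ vtilde k i)
    (αseq : ℕ → ℝ) (hαpos : ∀ k, 0 < αseq k) (hαmono : ∀ k, αseq (k+1) ≤ αseq k)
    (x z : ℕ → Fin n → ℝ)
    (hx0 : ∀ i, x 0 i = x 1 i)
    (hx : ∀ k, 1 ≤ k → k ≤ K → ∀ i,
      x (k+1) i = x k i - αseq k * (m k i / Real.sqrt (vtilde k i)))
    (hz : ∀ k, 1 ≤ k → ∀ i,
      z k i = x k i + (β₁ / (1 - β₁)) * (x k i - x (k-1) i))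
    (k : ℕ) (hk1 : 1 ≤ k) (hkK : k ≤ K) :
    Real.sqrt (∑ i, (z (k+1) i - z k i)^2)
      ≤ (β₁ / (1 - β₁)) * Real.sqrt (∑ i, (x (k-1) i - x k i)^2)
        + αseq k * Real.sqrt (∑ i, (g k i / Real.sqrt (vtilde k i))^2) := by
  obtain ⟨h0, h1⟩ := hβ₁
  have h1' : 0 < 1 - β₁ := by linarith
  have hb : 0 ≤ β₁ / (1 - β₁) := div_nonneg h0 h1'.le
  apply aux_minkowski _ _ hb (hαpos k).le
    (fun i => z (k+1) i - z k i) (fun i => x (k-1) i - x k i)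
  intro i
  obtain ⟨j, rfl⟩ : ∃ j, k = j + 1 := ⟨k - 1, by omega⟩
  have e1 := hz (j+1+1) (by omega) i
  have e2 := hz (j+1) (by omega) i
  have e3 := hx (j+1) hk1 hkK i
  have e4 := hm j i
  simp only [Nat.add_sub_cancel] at e1 e2 ⊢
  have e5 : z (j+1+1) i - z (j+1) i
      = β₁ / (1 - β₁) * ((x j i - x (j+1) i) - αseq (j+1) * (m j i / Real.sqrt (vtilde (j+1) i)))
        - αseq (j+1) * (g (j+1) i / Real.sqrt (vtilde (j+1) i)) := by
    rw [e1, e2, e3, e4]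
    field_simp
    ring
  have e6 : |(x j i - x (j+1) i) - αseq (j+1) * (m j i / Real.sqrt (vtilde (j+1) i))|
      ≤ |x j i - x (j+1) i| := by
    rcases Nat.eq_zero_or_pos j with rfl | hj
    · simp [hm0]
    · have e7 := hx j hj (by omega) i
      have hv := hvmono (j+1) (by omega) hkK i
      simp only [Nat.add_sub_cancel] at hv
      have hp := Real.sqrt_pos.2 (hvpos j hj (by omega) i)
      have hs := Real.sqrt_le_sqrt hv
      have hq : αseq (j+1) / Real.sqrt (vtilde (j+1) i) ≤ αseq j / Real.sqrt (vtilde j i) :=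
        div_le_div₀ (hαpos j).le (hαmono j) hp hs
      have hq0 : 0 ≤ αseq (j+1) / Real.sqrt (vtilde (j+1) i) :=
        div_nonneg (hαpos _).le (Real.sqrt_nonneg _)
      have a1 : x j i - x (j+1) i = αseq j / Real.sqrt (vtilde j i) * m j i := by
        rw [e7]; ring
      have a2 : αseq (j+1) * (m j i / Real.sqrt (vtilde (j+1) i))
          = αseq (j+1) / Real.sqrt (vtilde (j+1) i) * m j i := by ring
      rw [a1, a2, ← sub_mul, abs_mul, abs_mul]
      apply mul_le_mul_of_nonneg_right _ (abs_nonneg _)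
      rw [abs_of_nonneg (by linarith), abs_of_nonneg (by linarith)]
      linarith
  show |z (j+1+1) i - z (j+1) i| ≤ _
  rw [e5]
  refine (abs_sub _ _).trans ?_
  rw [abs_mul, abs_mul, abs_of_nonneg hb, abs_of_pos (hαpos _)]
  gcongr
end
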